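/- arXiv:2503.12397 — 2 statements merged into one kernel-verified Lean document; each statement's English description precedes it below -/
import Mathlib

section
/- There exist absolute constants C₁, C₂ > 0 such that for all integers n, m with 0 < m < n, every 1 ≤ p ≤ ∞ and every vector b = (b_1,…,b_{2n}) ∈ ℝ^{2n}, the wavelets satisfy the Riesz bounds C₁·‖b‖_{ℓ^p} ≤ ‖Σ_{k=1}^{2n} b_k ψ_{n,k}^m‖_p ≤ C₂·(1 + log²(n/m))·‖b‖_{ℓ^p}, where ‖b‖_{ℓ^p} = ((π/(2n)) Σ_{k=1}^{2n} |b_k|^p)^{1/p} for p < ∞ and ‖b‖_{ℓ^∞} = max_k |b_k|, and ‖f‖_p = (∫_{−1}^{1} |f(x)|^p w(x) dx)^{1/p} with ‖f‖_∞ the sup norm on [−1,1]. -/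
open Real MeasureTheory Finset

/-- Chebyshev nodes of the first kind: `x_k^n = cos((2k-1)π/(2n))`. -/
noncomputable def chebNode (n k : ℕ) : ℝ :=
  Real.cos ((2 * (k : ℝ) - 1) * Real.pi / (2 * (n : ℝ)))

/-- Orthonormal Chebyshev polynomials of the first kind. -/
noncomputable def chebP (r : ℕ) (x : ℝ) : ℝ :=
  if r = 0 then Real.sqrt (1 / Real.pi)
  else Real.sqrt (2 / Real.pi) * Real.cos ((r : ℝ) * Real.arccos x)

/-- Darboux kernel `K_r(x,y) = Σ_{s=0}^r p_s(x) p_s(y)`. -/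
noncomputable def darboux (r : ℕ) (x y : ℝ) : ℝ :=
  ∑ s ∈ Finset.range (r + 1), chebP s x * chebP s y

/-- de la Vallée Poussin kernel `v_n^m(x,y) = (1/(2m)) Σ_{r=n-m}^{n+m-1} K_r(x,y)`. -/
noncomputable def vpK (n m : ℕ) (x y : ℝ) : ℝ :=
  (1 / (2 * (m : ℝ))) * ∑ r ∈ Finset.Icc (n - m) (n + m - 1), darboux r x y

/-- The Chebyshev weight `w(x) = 1/√(1-x²)`. -/
noncomputable def chebW (x : ℝ) : ℝ := 1 / Real.sqrt (1 - x ^ 2)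

/-- Scaling functions `Φ_{n,k}^m(x) = (π/n) v_n^m(x_k^n, x)`. -/
noncomputable def scal (n m k : ℕ) (x : ℝ) : ℝ :=
  (Real.pi / (n : ℝ)) * vpK n m (chebNode n k) x

/-- The nodes `y_k^n`, `k = 1,…,2n`: the Chebyshev nodes of order `3n` not of order `n`. -/
noncomputable def yNode (n k : ℕ) : ℝ := chebNode (3 * n) (3 * k / 2)

/-- Wavelet functions `ψ_{n,k}^m`. -/
noncomputable def wav (n m k : ℕ) (x : ℝ) : ℝ :=
  (Real.pi / (3 * (n : ℝ))) * vpK (3 * n) m (yNode n k) x -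
    ∑ h ∈ Finset.Icc 1 n,
      scal n m h (yNode n k) * ((Real.pi / (3 * (n : ℝ))) * vpK (3 * n) m (chebNode n h) x)

/-- Filter coefficients `μ_{n,r}^m`. -/
noncomputable def muC (n m r : ℕ) : ℝ :=
  if r ≤ n - m then 1
  else if r < n + m then ((m : ℝ) + (n : ℝ) - (r : ℝ)) / (2 * (m : ℝ))
  else 0

/-- Squared norms `ν_{n,r}^m` of the orthogonal scaling basis. -/
noncomputable def nuC (n m r : ℕ) : ℝ :=
  if r ≤ n - m then 1 else ((m : ℝ) ^ 2 + ((n : ℝ) - (r : ℝ)) ^ 2) / (2 * (m : ℝ) ^ 2)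

/-- Orthogonal scaling basis `Φ_{n,r}^⊥`. -/
noncomputable def scalPerp (n m r : ℕ) (x : ℝ) : ℝ :=
  if r ≤ n - m then chebP r x
  else muC n m r * chebP r x - muC n m (2 * n - r) * chebP (2 * n - r) x

/-- The sup norm on `[-1,1]`. -/
noncomputable def supNorm (f : ℝ → ℝ) : ℝ := ⨆ x : Set.Icc (-1 : ℝ) 1, |f x|

/-- The Lebesgue constant `c_∞ = max_{|x|≤1} ∫_{-1}^1 |v_n^m(x,y)| w(y) dy`. -/
noncomputable def cInf (n m : ℕ) : ℝ :=
  ⨆ x : Set.Icc (-1 : ℝ) 1, ∫ y in (-1 : ℝ)..1, |vpK n m x y| * chebW y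


/-- The weighted `L^q` norm on `[-1,1]`. -/
noncomputable def lpNorm (q : ℝ) (f : ℝ → ℝ) : ℝ :=
  (∫ x in (-1 : ℝ)..1, |f x| ^ q * chebW x) ^ (1 / q)

/-! ### Kernels on the circle -/

/-- Twice the Dirichlet kernel. -/
noncomputable def dirK (r : ℕ) (t : ℝ) : ℝ := 1 + ∑ s ∈ Finset.range r, 2 * Real.cos ((s + 1 : ℕ) * t)

/-- Unnormalized Fejer kernel. -/
noncomputable def fejQ (M : ℕ) (t : ℝ) : ℝ := ∑ r ∈ Finset.range M, dirK r t

/-- Normalized Fejer kernel. -/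
noncomputable def fejK (M : ℕ) (t : ℝ) : ℝ := (1 / (M : ℝ)) * fejQ M t

/-- The VP kernel on the circle. -/
noncomputable def vpG (n m : ℕ) (t : ℝ) : ℝ := (1 / (4 * (m : ℝ))) * (fejQ (n + m) t - fejQ (n - m) t)

lemma dirK_succ (r : ℕ) (t : ℝ) : dirK (r + 1) t = dirK r t + 2 * Real.cos ((r + 1 : ℕ) * t) := by
  unfold dirK; rw [Finset.sum_range_succ]; ring

lemma dirK_mul_sin (r : ℕ) (t : ℝ) :
    dirK r t * Real.sin (t / 2) = Real.sin ((r : ℝ) * t + t / 2) := by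
  induction r with
  | zero => simp [dirK]
  | succ r ih =>
    rw [dirK_succ, add_mul, ih]
    have e1 : (r : ℝ) * t + t / 2 = ((r + 1 : ℕ) * t) - t / 2 := by push_cast; ring
    rw [e1, Real.sin_sub, Real.sin_add]
    ring

lemma fejQ_succ (M : ℕ) (t : ℝ) : fejQ (M + 1) t = fejQ M t + dirK M t := by
  unfold fejQ; rw [Finset.sum_range_succ]

lemma fejQ_mul_sin (M : ℕ) (t : ℝ) :
    fejQ M t * Real.sin (t / 2) ^ 2 = Real.sin ((M : ℝ) * t / 2) ^ 2 := by
  induction M with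
  | zero => simp [fejQ]
  | succ M ih =>
    rw [fejQ_succ, add_mul, ih, pow_two (Real.sin (t / 2)), ← mul_assoc, dirK_mul_sin]
    have e1 : (M : ℝ) * t + t / 2 = (M : ℝ) * t / 2 + ((M : ℝ) * t / 2 + t / 2) := by ring
    have e2 : ((M + 1 : ℕ) : ℝ) * t / 2 = (M : ℝ) * t / 2 + t / 2 := by push_cast; ring
    rw [e1, e2]
    generalize (M : ℝ) * t / 2 = a
    generalize t / 2 = b
    simp only [Real.sin_add, Real.cos_add]
    have h1 := Real.sin_sq_add_cos_sq a
    have h2 := Real.sin_sq_add_cos_sq b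
    linear_combination (-(Real.sin a) ^ 2) * h2

lemma dirK_of_sin_eq_zero (r : ℕ) {t : ℝ} (h : Real.sin (t / 2) = 0) : dirK r t = 2 * r + 1 := by
  obtain ⟨k, hk⟩ := Real.sin_eq_zero_iff.mp h
  induction r with
  | zero => simp [dirK]
  | succ r ih =>
    rw [dirK_succ, ih]
    have : ((r + 1 : ℕ) : ℝ) * t = (((r + 1 : ℕ) * k : ℤ) : ℝ) * (2 * π) := by
      push_cast; linear_combination (-2 * ((r : ℝ) + 1)) * hk
    rw [this, Real.cos_int_mul_two_pi]; push_cast; ring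

lemma fejQ_of_sin_eq_zero (M : ℕ) {t : ℝ} (h : Real.sin (t / 2) = 0) : fejQ M t = (M : ℝ) ^ 2 := by
  induction M with
  | zero => simp [fejQ]
  | succ M ih => rw [fejQ_succ, ih, dirK_of_sin_eq_zero M h]; push_cast; ring

lemma fejQ_nonneg (M : ℕ) (t : ℝ) : 0 ≤ fejQ M t := by
  by_cases h : Real.sin (t / 2) = 0
  · rw [fejQ_of_sin_eq_zero M h]; positivity
  · have h2 : 0 < Real.sin (t / 2) ^ 2 := by positivity
    have := fejQ_mul_sin M t
    by_contra hc
    push Not at hc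
    nlinarith [mul_neg_of_neg_of_pos hc h2, sq_nonneg (Real.sin ((M : ℝ) * t / 2))]

lemma fejQ_two_mul (M : ℕ) (t : ℝ) : fejQ (2 * M) t ≤ 4 * fejQ M t := by
  by_cases h : Real.sin (t / 2) = 0
  · rw [fejQ_of_sin_eq_zero _ h, fejQ_of_sin_eq_zero _ h]; push_cast; nlinarith
  · have h2 : 0 < Real.sin (t / 2) ^ 2 := by positivity
    refine le_of_mul_le_mul_right ?_ h2
    rw [mul_assoc, fejQ_mul_sin, fejQ_mul_sin]
    have e : ((2 * M : ℕ) : ℝ) * t / 2 = 2 * ((M : ℝ) * t / 2) := by push_cast; ring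
    rw [e, Real.sin_two_mul]
    nlinarith [Real.sin_sq_add_cos_sq ((M : ℝ) * t / 2), sq_nonneg (Real.sin ((M : ℝ) * t / 2)),
      mul_nonneg (sq_nonneg (Real.sin ((M : ℝ) * t / 2))) (sq_nonneg (Real.sin ((M : ℝ) * t / 2)))]

lemma vpG_mul_sin {n m : ℕ} (hm : 0 < m) (hmn : m ≤ n) (t : ℝ) :
    vpG n m t * Real.sin (t / 2) ^ 2 = Real.sin (n * t) * Real.sin (m * t) / (4 * m) := by
  unfold vpG
  rw [mul_assoc, sub_mul, fejQ_mul_sin, fejQ_mul_sin]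
  have hm' : (m : ℝ) ≠ 0 := by positivity
  have e1 : ((n + m : ℕ) : ℝ) * t / 2 = n * t / 2 + m * t / 2 := by push_cast; ring
  have e2 : ((n - m : ℕ) : ℝ) * t / 2 = n * t / 2 - m * t / 2 := by rw [Nat.cast_sub hmn]; ring
  have e3 : (n : ℝ) * t = 2 * (n * t / 2) := by ring
  have e4 : (m : ℝ) * t = 2 * (m * t / 2) := by ring
  rw [e1, e2, e3, e4]
  simp only [mul_div_assoc]
  rw [Real.sin_two_mul, Real.sin_two_mul, Real.sin_add, Real.sin_sub]
  field_simp
  ring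

lemma vpG_of_sin_eq_zero {n m : ℕ} (hm : 0 < m) (hmn : m ≤ n) {t : ℝ} (h : Real.sin (t / 2) = 0) :
    vpG n m t = n := by
  unfold vpG
  rw [fejQ_of_sin_eq_zero _ h, fejQ_of_sin_eq_zero _ h, Nat.cast_sub hmn]
  have hm' : (m : ℝ) ≠ 0 := by positivity
  push_cast
  field_simp
  ring

/-- Base estimate. -/
lemma vpG_base {n m : ℕ} (hm : 0 < m) (hmn : m ≤ n) (t : ℝ) :
    |vpG n m t| ≤ (n / (4 * m) : ℝ) * fejK (2 * n) t + (1 / 4) * fejK (2 * m) t := by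
  have hm' : (0 : ℝ) < m := by positivity
  have hn' : (0 : ℝ) < n := by have : 0 < n := by omega
                               positivity
  have hle : (m : ℝ) ≤ n := by exact_mod_cast hmn
  have key : (n / (4 * m) : ℝ) * fejK (2 * n) t + (1 / 4) * fejK (2 * m) t
      = (fejQ (2 * n) t + fejQ (2 * m) t) / (8 * m) := by
    unfold fejK; push_cast; field_simp; ring
  rw [key]
  by_cases h : Real.sin (t / 2) = 0
  · rw [vpG_of_sin_eq_zero hm hmn h, fejQ_of_sin_eq_zero _ h, fejQ_of_sin_eq_zero _ h, abs_of_pos hn',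
      le_div_iff₀ (by positivity)]
    push_cast; nlinarith [sq_nonneg ((n : ℝ) - m)]
  · have h2 : 0 < Real.sin (t / 2) ^ 2 := by positivity
    refine le_of_mul_le_mul_right ?_ h2
    rw [← abs_of_pos h2, ← abs_mul, abs_of_pos h2, vpG_mul_sin hm hmn, div_mul_eq_mul_div, add_mul,
      fejQ_mul_sin, fejQ_mul_sin]
    have e1 : ((2 * n : ℕ) : ℝ) * t / 2 = n * t := by push_cast; ring
    have e2 : ((2 * m : ℕ) : ℝ) * t / 2 = m * t := by push_cast; ring
    rw [e1, e2, abs_div, abs_of_pos (by positivity : (0 : ℝ) < 4 * m), div_le_div_iff₀ (by positivity) (by positivity)]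
    have : |Real.sin (n * t) * Real.sin (m * t)| * 2 ≤ Real.sin (n * t) ^ 2 + Real.sin (m * t) ^ 2 := by
      rw [abs_mul, ← sq_abs (Real.sin (n * t)), ← sq_abs (Real.sin (m * t))]
      nlinarith [sq_nonneg (|Real.sin (n * t)| - |Real.sin (m * t)|)]
    nlinarith

/-- Doubling estimate. -/
lemma vpG_double {n m : ℕ} (hm : 0 < m) (hmn : 2 * m ≤ n) (t : ℝ) :
    |vpG n m t| ≤ |vpG n (2 * m) t| + (1 / 2) * fejK m t := by
  have hm' : (0 : ℝ) < m := by positivity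
  by_cases h : Real.sin (t / 2) = 0
  · rw [vpG_of_sin_eq_zero hm (by omega) h, vpG_of_sin_eq_zero (by omega) hmn h]
    have := fejQ_nonneg m t
    have : 0 ≤ fejK m t := by unfold fejK; positivity
    linarith
  · have h2 : 0 < Real.sin (t / 2) ^ 2 := by positivity
    have hd : |vpG n m t - vpG n (2 * m) t| ≤ (1 / 2) * fejK m t := by
      refine le_of_mul_le_mul_right ?_ h2
      rw [← abs_of_pos h2, ← abs_mul, abs_of_pos h2, sub_mul, vpG_mul_sin hm (by omega), vpG_mul_sin (by omega) hmn]
      unfold fejK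
      rw [mul_assoc, mul_assoc, fejQ_mul_sin]
      have e1 : ((2 * m : ℕ) : ℝ) * t = 2 * (2 * (m * t / 2)) := by push_cast; ring
      have e2 : (m : ℝ) * t = 2 * (m * t / 2) := by ring
      rw [e1]
      have e3 : Real.sin (n * t) * Real.sin (m * t) / (4 * m) - Real.sin (n * t) * Real.sin (2 * (2 * (m * t / 2))) / (4 * ((2 * m : ℕ) : ℝ))
          = (Real.sin (n * t) * Real.sin (m * t)) * ((1 / 2) * ((1 / m) * Real.sin (m * t / 2) ^ 2)) := by
        rw [Real.sin_two_mul (2 * (m * t / 2)), Real.cos_two_mul, Real.cos_sq', ← e2]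
        push_cast
        field_simp
        ring
      rw [e3, abs_mul]
      have h5 : 0 ≤ (1 / 2) * ((1 / (m : ℝ)) * Real.sin (m * t / 2) ^ 2) := by positivity
      rw [abs_of_nonneg h5]
      refine mul_le_of_le_one_left h5 ?_
      rw [abs_mul]
      exact mul_le_one₀ (Real.abs_sin_le_one _) (abs_nonneg _) (Real.abs_sin_le_one _)
    have := abs_sub_abs_le_abs_sub (vpG n m t) (vpG n (2 * m) t)
    linarith

/-- Nonnegative kernels with controlled means. -/
structure GoodK (L₀ : ℕ) (W : ℝ) (A : ℝ → ℝ) : Prop where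
  cont : Continuous A
  nonneg : ∀ t, 0 ≤ A t
  even : ∀ t, A (-t) = A t
  per : Function.Periodic A (2 * π)
  int : ∫ t in (0 : ℝ)..(2 * π), A t = 2 * π * W
  grid : ∀ L : ℕ, L₀ ≤ L → 0 < L → ∀ s : ℝ, ∑ i ∈ Finset.range L, A (s + 2 * π * i / L) = L * W

lemma GoodK.mono {L₀ L₁ : ℕ} {W : ℝ} {A : ℝ → ℝ} (h : GoodK L₀ W A) (hL : L₀ ≤ L₁) : GoodK L₁ W A :=
  { h with grid := fun L hL' => h.grid L (hL.trans hL') }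

lemma GoodK.add {L₀ : ℕ} {W W' : ℝ} {A A' : ℝ → ℝ} (h : GoodK L₀ W A) (h' : GoodK L₀ W' A') :
    GoodK L₀ (W + W') (fun t => A t + A' t) where
  cont := h.cont.add h'.cont
  nonneg t := add_nonneg (h.nonneg t) (h'.nonneg t)
  even t := by simp only [h.even, h'.even]
  per t := by simp only [h.per t, h'.per t]
  int := by
    rw [intervalIntegral.integral_add (h.cont.intervalIntegrable _ _) (h'.cont.intervalIntegrable _ _), h.int, h'.int]; ring
  grid L hL hL' s := by rw [Finset.sum_add_distrib, h.grid L hL hL', h'.grid L hL hL']; ring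

lemma GoodK.smul {L₀ : ℕ} {W c : ℝ} {A : ℝ → ℝ} (hc : 0 ≤ c) (h : GoodK L₀ W A) :
    GoodK L₀ (c * W) (fun t => c * A t) where
  cont := continuous_const.mul h.cont
  nonneg t := mul_nonneg hc (h.nonneg t)
  even t := by simp only [h.even]
  per t := by simp only [h.per t]
  int := by rw [intervalIntegral.integral_const_mul, h.int]; ring
  grid L hL hL' s := by rw [← Finset.mul_sum, h.grid L hL hL']; ring

lemma dirK_continuous (r : ℕ) : Continuous (dirK r) := by unfold dirK; fun_prop

lemma fejQ_continuous (M : ℕ) : Continuous (fejQ M) := by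
  unfold fejQ; exact continuous_finsetSum _ fun r _ => dirK_continuous r

lemma vpG_continuous (n m : ℕ) : Continuous (vpG n m) := by
  unfold vpG; exact continuous_const.mul ((fejQ_continuous _).sub (fejQ_continuous _))

lemma dirK_even (r : ℕ) (t : ℝ) : dirK r (-t) = dirK r t := by
  unfold dirK; simp only [mul_neg, Real.cos_neg]

lemma fejQ_even (r : ℕ) (t : ℝ) : fejQ r (-t) = fejQ r t := by
  unfold fejQ; simp only [dirK_even]

lemma vpG_even (n m : ℕ) (t : ℝ) : vpG n m (-t) = vpG n m t := by
  unfold vpG; simp only [fejQ_even]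

lemma dirK_per (r : ℕ) : Function.Periodic (dirK r) (2 * π) := by
  intro t
  unfold dirK
  congr 1
  refine Finset.sum_congr rfl fun s _ => ?_
  rw [mul_add, Real.cos_add_nat_mul_two_pi]

lemma fejQ_per (M : ℕ) : Function.Periodic (fejQ M) (2 * π) := by
  intro t
  unfold fejQ
  exact Finset.sum_congr rfl fun r _ => dirK_per r t

lemma vpG_per (n m : ℕ) : Function.Periodic (vpG n m) (2 * π) := by
  intro t; unfold vpG; rw [fejQ_per, fejQ_per]

lemma integral_cos_full {a : ℤ} (ha : a ≠ 0) (c : ℝ) :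
    ∫ t in (0 : ℝ)..(2 * π), Real.cos ((a : ℝ) * t + c) = 0 := by
  have ha' : (a : ℝ) ≠ 0 := by exact_mod_cast ha
  rw [intervalIntegral.integral_comp_mul_add (fun x => Real.cos x) ha' c, integral_cos]
  have : (a : ℝ) * (2 * π) + c = c + a * (2 * π) := by ring
  rw [this, Real.sin_add_int_mul_two_pi]; simp

lemma grid_cos {L k : ℕ} (hk : 0 < k) (hkL : k < L) (s : ℝ) :
    ∑ i ∈ Finset.range L, Real.cos (k * (s + 2 * π * i / L)) = 0 := by
  have hL : (0 : ℝ) < L := by have : 0 < L := by omega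
                              positivity
  have hk' : (0 : ℝ) < k := by positivity
  have hkL' : (k : ℝ) < L := by exact_mod_cast hkL
  set h : ℝ := 2 * π * k / L with hh
  have tel : ∀ N : ℕ, (∑ i ∈ Finset.range N, Real.cos (k * (s + 2 * π * i / L))) * (2 * Real.sin (h / 2))
      = Real.sin (k * s + (N : ℝ) * h - h / 2) - Real.sin (k * s - h / 2) := by
    intro N
    induction N with
    | zero => simp
    | succ N ih =>
      rw [Finset.sum_range_succ, add_mul, ih]
      have e1 : (k : ℝ) * (s + 2 * π * N / L) = k * s + N * h := by rw [hh]; ring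
      have e2 : (k : ℝ) * s + ((N + 1 : ℕ) : ℝ) * h - h / 2 = (k * s + N * h) + h / 2 := by push_cast; ring
      rw [e1, e2, Real.sin_add (k * s + N * h), Real.sin_sub (k * s + N * h)]
      ring
  have t1 := tel L
  have e : (k : ℝ) * s + (L : ℝ) * h - h / 2 = (k * s - h / 2) + k * (2 * π) := by
    rw [hh]; field_simp; ring
  rw [e, Real.sin_add_nat_mul_two_pi, sub_self] at t1
  have hpos : 0 < Real.sin (h / 2) := by
    apply Real.sin_pos_of_pos_of_lt_pi
    · rw [hh]; positivity
    · rw [hh, div_div, div_lt_iff₀ (by positivity)]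
      nlinarith [Real.pi_pos]
  rcases mul_eq_zero.mp t1 with h1 | h1
  · exact h1
  · linarith

lemma dirK_int (r : ℕ) : ∫ t in (0 : ℝ)..(2 * π), dirK r t = 2 * π := by
  induction r with
  | zero => simp [dirK]
  | succ r ih =>
    simp only [dirK_succ]
    rw [intervalIntegral.integral_add ((dirK_continuous r).intervalIntegrable _ _) (by apply Continuous.intervalIntegrable; fun_prop), ih,
      intervalIntegral.integral_const_mul]
    have := integral_cos_full (a := ((r + 1 : ℕ) : ℤ)) (by omega) 0
    simp only [add_zero, Int.cast_natCast] at this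
    rw [this]; ring

lemma dirK_grid {r L : ℕ} (h : r < L) (s : ℝ) : ∑ i ∈ Finset.range L, dirK r (s + 2 * π * i / L) = L := by
  induction r with
  | zero => simp [dirK]
  | succ r ih =>
    simp only [dirK_succ]
    rw [Finset.sum_add_distrib, ih (by omega), ← Finset.mul_sum, grid_cos (by omega) h]; ring

lemma fejK_good {M : ℕ} (hM : 0 < M) : GoodK M 1 (fejK M) where
  cont := by unfold fejK; exact continuous_const.mul (fejQ_continuous M)
  nonneg t := by unfold fejK; have := fejQ_nonneg M t; positivity
  even t := by unfold fejK; rw [fejQ_even]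
  per t := by unfold fejK; rw [fejQ_per]
  int := by
    have hM' : (M : ℝ) ≠ 0 := by positivity
    unfold fejK fejQ
    rw [intervalIntegral.integral_const_mul, intervalIntegral.integral_finsetSum fun r _ => (dirK_continuous r).intervalIntegrable _ _]
    simp only [dirK_int]
    simp; field_simp
  grid L hL hL' s := by
    have hM' : (M : ℝ) ≠ 0 := by positivity
    unfold fejK fejQ
    rw [← Finset.mul_sum, Finset.sum_comm,
      Finset.sum_congr rfl fun r hr => dirK_grid (lt_of_lt_of_le (Finset.mem_range.mp hr) hL) s]
    simp; field_simp

/-- The VP kernel is dominated by a good kernel with logarithmic mean. -/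
lemma vpG_dom {n : ℕ} : ∀ d m : ℕ, n - m = d → 0 < m → m ≤ n → ∃ (A : ℝ → ℝ) (W : ℝ), GoodK (2 * n) W A ∧
    W ≤ 1 + Real.log ((n : ℝ) / m) ∧ ∀ t, |vpG n m t| ≤ A t := by
  intro d
  induction d using Nat.strong_induction_on with
  | _ d ih =>
  intro m hd hm hmn
  have hm' : (0 : ℝ) < m := by positivity
  have hn : 0 < n := by omega
  have hn' : (0 : ℝ) < n := by positivity
  have hle : (m : ℝ) ≤ n := by exact_mod_cast hmn
  by_cases h2 : 2 * m ≤ n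
  · obtain ⟨A, W, hA, hW, hdom⟩ := ih (n - 2 * m) (by omega) (2 * m) rfl (by omega) h2
    refine ⟨_, _, hA.add (((fejK_good hm).mono (by omega : m ≤ 2 * n)).smul (c := 1 / 2) (by norm_num)), ?_, fun t => ?_⟩
    · have : (n : ℝ) / ((2 * m : ℕ) : ℝ) = (n / m : ℝ) / 2 := by push_cast; field_simp
      rw [this, Real.log_div (by positivity) (by norm_num)] at hW
      have := Real.log_two_gt_d9
      linarith
    · exact (vpG_double hm h2 t).trans (by gcongr; exact hdom t)
  · refine ⟨_, _, (((fejK_good (by omega : 0 < 2 * n)).smul (c := (n / (4 * m) : ℝ)) (by positivity))).add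
      (((fejK_good (by omega : 0 < 2 * m)).mono (by omega : 2 * m ≤ 2 * n)).smul (c := 1 / 4) (by norm_num)), ?_, fun t => vpG_base hm hmn t⟩
    have h0 : 0 ≤ Real.log ((n : ℝ) / m) := Real.log_nonneg (by rw [le_div_iff₀ hm']; linarith)
    have h3 : (n : ℝ) / (4 * m) ≤ 1 / 2 := by
      rw [div_le_div_iff₀ (by positivity) (by norm_num)]
      have : (n : ℝ) < 2 * m := by exact_mod_cast (by omega : n < 2 * m)
      linarith
    linarith

/-! ### Angles, folding, link to the VP kernel -/

/-- Chebyshev angles. -/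
noncomputable def ang (N k : ℕ) : ℝ := (2 * (k : ℝ) - 1) * Real.pi / (2 * (N : ℝ))

/-- Scaling function in the angle variable. -/
noncomputable def sc (N m k : ℕ) (φ : ℝ) : ℝ :=
  (1 / (N : ℝ)) * (vpG N m (ang N k - φ) + vpG N m (ang N k + φ))

lemma ang_mem {N k : ℕ} (hk : 1 ≤ k) (hkN : k ≤ N) : ang N k ∈ Set.Icc 0 π := by
  have h1 : (1 : ℝ) ≤ k := by exact_mod_cast hk
  have h2 : (k : ℝ) ≤ N := by exact_mod_cast hkN
  have := Real.pi_pos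
  unfold ang
  constructor
  · apply div_nonneg
    · apply mul_nonneg <;> linarith
    · linarith
  · rw [div_le_iff₀ (by linarith)]; nlinarith

lemma chebP_mul (s : ℕ) {θ φ : ℝ} (hθ : θ ∈ Set.Icc 0 π) (hφ : φ ∈ Set.Icc 0 π) :
    chebP (s + 1) (Real.cos θ) * chebP (s + 1) (Real.cos φ) =
      (1 / (2 * π)) * (2 * Real.cos ((s + 1 : ℕ) * (θ - φ)) + 2 * Real.cos ((s + 1 : ℕ) * (θ + φ))) := by
  unfold chebP
  rw [if_neg (by omega), if_neg (by omega), Real.arccos_cos hθ.1 hθ.2, Real.arccos_cos hφ.1 hφ.2]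
  have h : Real.sqrt (2 / π) * Real.sqrt (2 / π) = 2 / π := Real.mul_self_sqrt (by positivity)
  rw [mul_sub _ θ φ, mul_add _ θ φ, Real.cos_sub, Real.cos_add]
  generalize Real.cos ((s + 1 : ℕ) * θ) = a
  generalize Real.cos ((s + 1 : ℕ) * φ) = b
  have hp := Real.pi_pos.ne'
  have e : Real.sqrt (2 / π) * a * (Real.sqrt (2 / π) * b) = (2 / π) * (a * b) := by linear_combination (a * b) * h
  rw [e]; field_simp; ring

lemma darboux_cos (r : ℕ) {θ φ : ℝ} (hθ : θ ∈ Set.Icc 0 π) (hφ : φ ∈ Set.Icc 0 π) :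
    darboux r (Real.cos θ) (Real.cos φ) = (1 / (2 * π)) * (dirK r (θ - φ) + dirK r (θ + φ)) := by
  induction r with
  | zero =>
    have h : Real.sqrt (1 / π) * Real.sqrt (1 / π) = 1 / π := Real.mul_self_sqrt (by positivity)
    have hp := Real.pi_pos.ne'
    simp only [darboux, chebP, dirK, zero_add, Finset.sum_range_one, if_true, h, Finset.range_zero, Finset.sum_empty]
    field_simp; ring
  | succ r ih =>
    have : darboux (r + 1) (Real.cos θ) (Real.cos φ) = darboux r (Real.cos θ) (Real.cos φ)
        + chebP (r + 1) (Real.cos θ) * chebP (r + 1) (Real.cos φ) := by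
      unfold darboux; rw [Finset.sum_range_succ]
    rw [this, ih, chebP_mul r hθ hφ, dirK_succ, dirK_succ]; ring

lemma sum_dirK_Icc {n m : ℕ} (hm : 0 < m) (t : ℝ) :
    ∑ r ∈ Finset.Icc (n - m) (n + m - 1), dirK r t = 4 * m * vpG n m t := by
  have hm' : (m : ℝ) ≠ 0 := by positivity
  have : Finset.Icc (n - m) (n + m - 1) = Finset.Ico (n - m) (n + m) := by
    ext x; simp only [Finset.mem_Icc, Finset.mem_Ico]; omega
  rw [this, Finset.sum_Ico_eq_sub _ (by omega)]
  unfold vpG fejQ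
  field_simp

lemma vpK_cos {n m : ℕ} (hm : 0 < m) {θ φ : ℝ} (hθ : θ ∈ Set.Icc 0 π) (hφ : φ ∈ Set.Icc 0 π) :
    vpK n m (Real.cos θ) (Real.cos φ) = (1 / π) * (vpG n m (θ - φ) + vpG n m (θ + φ)) := by
  unfold vpK
  rw [Finset.sum_congr rfl fun r _ => darboux_cos r hθ hφ, ← Finset.mul_sum, Finset.sum_add_distrib,
    sum_dirK_Icc hm, sum_dirK_Icc hm]
  have hm' : (m : ℝ) ≠ 0 := by positivity
  have hp := Real.pi_pos.ne'
  field_simp; ring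

lemma scal_cos {n m k : ℕ} (hm : 0 < m) (hn : 0 < n) (hk : 1 ≤ k) (hkn : k ≤ n) {φ : ℝ} (hφ : φ ∈ Set.Icc 0 π) :
    scal n m k (Real.cos φ) = sc n m k φ := by
  unfold scal sc chebNode
  have := vpK_cos (n := n) hm (ang_mem hk hkn) hφ
  unfold ang at this
  rw [this]
  unfold ang
  have hp := Real.pi_pos.ne'
  have hn' : (n : ℝ) ≠ 0 := by positivity
  field_simp

lemma sc_continuous (N m k : ℕ) : Continuous (sc N m k) := by
  unfold sc
  have := vpG_continuous N m
  fun_prop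

lemma sc_even (N m k : ℕ) (φ : ℝ) : sc N m k (-φ) = sc N m k φ := by
  unfold sc; rw [sub_neg_eq_add, ← sub_eq_add_neg, add_comm]
  
lemma sc_per (N m k : ℕ) : Function.Periodic (sc N m k) (2 * π) := by
  intro φ
  unfold sc
  have h1 : ang N k - (φ + 2 * π) = (ang N k - φ) - 2 * π := by ring
  rw [h1, (vpG_per N m).sub_eq, ← add_assoc, vpG_per N m]

/-- Interpolation property. -/
lemma sc_interp {N m i j : ℕ} (hm : 0 < m) (hmN : m < N) (hi : 1 ≤ i) (hiN : i ≤ N) (hj : 1 ≤ j) (hjN : j ≤ N) :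
    sc N m i (ang N j) = if i = j then 1 else 0 := by
  have hN : (0 : ℝ) < N := by have : 0 < N := by omega
                              positivity
  have hp := Real.pi_pos
  have van : ∀ (a : ℤ), (∀ b : ℤ, a ≠ 2 * N * b) → vpG N m (a * π / N) = 0 := by
    intro a ha
    have hs : Real.sin (a * π / N / 2) ≠ 0 := by
      intro h0
      obtain ⟨b, hb⟩ := Real.sin_eq_zero_iff.mp h0
      apply ha b
      have : (a : ℝ) = 2 * N * b := by
        field_simp at hb
        linarith
      exact_mod_cast this
    have h2 : Real.sin (a * π / N / 2) ^ 2 ≠ 0 := pow_ne_zero 2 hs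
    have := vpG_mul_sin hm hmN.le (a * π / N)
    have e : (N : ℝ) * (a * π / N) = a * π := by field_simp
    rw [e, Real.sin_int_mul_pi, zero_mul, zero_div] at this
    exact (mul_eq_zero.mp this).resolve_right h2
  have e1 : ang N i + ang N j = ((i + j - 1 : ℤ) : ℝ) * π / N := by
    unfold ang; push_cast; field_simp; ring
  have e2 : ang N i - ang N j = ((i - j : ℤ) : ℝ) * π / N := by
    unfold ang; push_cast; field_simp; ring
  have v1 : vpG N m (ang N i + ang N j) = 0 := by
    rw [e1]; apply van
    intro b hb
    have : 0 < b := by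
      by_contra hc
      push Not at hc
      nlinarith
    have : b < 1 := by
      by_contra hc
      push Not at hc
      nlinarith
    omega
  unfold sc
  rw [v1, add_zero]
  split_ifs with hij
  · subst hij
    rw [sub_self, vpG_of_sin_eq_zero hm hmN.le (by simp)]
    field_simp
  · rw [e2, van, mul_zero]
    intro b hb
    have hij' : (i : ℤ) ≠ j := by exact_mod_cast hij
    rcases lt_trichotomy b 0 with h | h | h
    · have : b ≤ -1 := by omega
      nlinarith
    · subst h; omega
    · have : 1 ≤ b := by omega
      nlinarith

lemma fold_sum {N : ℕ} (hN : 0 < N) {L₀ : ℕ} {W : ℝ} {A : ℝ → ℝ} (h : GoodK L₀ W A) (hL : L₀ ≤ 2 * N) (φ : ℝ) :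
    ∑ k ∈ Finset.Icc 1 N, (A (ang N k - φ) + A (ang N k + φ)) = 2 * N * W := by
  have hN' : (N : ℝ) ≠ 0 := by positivity
  have g := h.grid (2 * N) hL (by omega) (ang N 1 - φ)
  rw [two_mul N, Finset.sum_range_add, ← Finset.sum_range_reflect (fun x => A (ang N 1 - φ + 2 * π * ((N + x : ℕ) : ℝ) / ((N + N : ℕ) : ℝ))),
    ← Finset.sum_add_distrib] at g
  have : ∑ k ∈ Finset.Icc 1 N, (A (ang N k - φ) + A (ang N k + φ)) =
      ∑ k ∈ Finset.range N, (A (ang N (k + 1) - φ) + A (ang N (k + 1) + φ)) := by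
    rw [Finset.range_eq_Ico, Finset.sum_Ico_add' (fun k => A (ang N k - φ) + A (ang N k + φ)) 0 N 1]
    rfl
  rw [this]
  have e : (2 * N * W : ℝ) = ((N + N : ℕ) : ℝ) * W := by push_cast; ring
  rw [e, ← g]
  refine Finset.sum_congr rfl fun k hk => ?_
  have hk := Finset.mem_range.mp hk
  congr 1
  · congr 1
    unfold ang; push_cast; field_simp; ring
  · rw [← h.even, ← h.per]
    congr 1
    have : ((N + (N - 1 - k) : ℕ) : ℝ) = 2 * N - 1 - k := by
      rw [show N + (N - 1 - k) = 2 * N - (1 + k) by omega, Nat.cast_sub (by omega)]; push_cast; ring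
    rw [this]
    unfold ang; push_cast; field_simp; ring

lemma fold_int {g : ℝ → ℝ} (hg : Continuous g) (hp : Function.Periodic g (2 * π)) (θ : ℝ) :
    ∫ φ in (0 : ℝ)..π, (g (θ - φ) + g (θ + φ)) = ∫ t in (0 : ℝ)..(2 * π), g t := by
  rw [intervalIntegral.integral_add (by apply Continuous.intervalIntegrable; fun_prop) (by apply Continuous.intervalIntegrable; fun_prop),
    intervalIntegral.integral_comp_sub_left (fun x => g x), intervalIntegral.integral_comp_add_left (fun x => g x)]
  simp only [sub_zero, add_zero]
  rw [intervalIntegral.integral_add_adjacent_intervals (hg.intervalIntegrable _ _) (hg.intervalIntegrable _ _)]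
  have := hp.intervalIntegral_add_eq (θ - π) 0
  rw [zero_add, show θ - π + 2 * π = θ + π by ring] at this
  exact this

lemma abs_sc_le {N m : ℕ} {A : ℝ → ℝ} (hA : ∀ t, |vpG N m t| ≤ A t) (k : ℕ) (φ : ℝ) :
    |sc N m k φ| ≤ (1 / (N : ℝ)) * (A (ang N k - φ) + A (ang N k + φ)) := by
  unfold sc
  rw [abs_mul, abs_of_nonneg (by positivity : (0 : ℝ) ≤ 1 / N)]
  gcongr
  exact (abs_add_le _ _).trans (add_le_add (hA _) (hA _))

lemma sc_bounds {n m : ℕ} (hm : 0 < m) (hmn : m < n) : ∃ W : ℝ, W ≤ 1 + Real.log ((n : ℝ) / m) ∧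
    (∀ φ, ∑ k ∈ Finset.Icc 1 n, |sc n m k φ| ≤ 2 * W) ∧
    (∀ k, ∫ φ in (0 : ℝ)..π, |sc n m k φ| ≤ 2 * π * W / n) ∧
    (∀ h, ∑ j ∈ Finset.Icc 1 (3 * n), |sc n m h (ang (3 * n) j)| ≤ 6 * W) := by
  obtain ⟨A, W, hA, hW, hdom⟩ := vpG_dom (n - m) m rfl hm hmn.le
  have hn : 0 < n := by omega
  have hn' : (n : ℝ) ≠ 0 := by positivity
  refine ⟨W, hW, fun φ => ?_, fun k => ?_, fun h => ?_⟩
  · refine (Finset.sum_le_sum fun k _ => abs_sc_le hdom k φ).trans ?_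
    rw [← Finset.mul_sum, fold_sum hn hA le_rfl]
    apply le_of_eq; field_simp
  · have hc := hA.cont
    refine (intervalIntegral.integral_mono_on Real.pi_pos.le ((sc_continuous n m k).abs.intervalIntegrable _ _)
      ?_ fun φ _ => abs_sc_le hdom k φ).trans ?_
    · apply Continuous.intervalIntegrable; fun_prop
    · rw [intervalIntegral.integral_const_mul, fold_int hc hA.per, hA.int]
      apply le_of_eq; field_simp
  · refine (Finset.sum_le_sum fun j _ => abs_sc_le hdom h (ang (3 * n) j)).trans ?_
    have : ∀ j, A (ang n h - ang (3 * n) j) + A (ang n h + ang (3 * n) j) =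
        A (ang (3 * n) j - ang n h) + A (ang (3 * n) j + ang n h) := by
      intro j
      rw [← hA.even (ang n h - ang (3 * n) j), neg_sub, add_comm (ang n h)]
    simp only [this]
    rw [← Finset.mul_sum, fold_sum (by omega) hA (by omega)]
    apply le_of_eq; push_cast; field_simp; ring

/-! ### Jensen-type inequalities -/

lemma jensen_sum {ι : Type*} (s : Finset ι) (K b : ι → ℝ) {p B : ℝ} (hp : 1 ≤ p) (hB : ∑ i ∈ s, |K i| ≤ B) :
    |∑ i ∈ s, b i * K i| ^ p ≤ B ^ (p - 1) * ∑ i ∈ s, |K i| * |b i| ^ p := by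
  have hp0 : 0 < p := by linarith
  have h0 : 0 ≤ ∑ i ∈ s, |K i| := Finset.sum_nonneg fun i _ => abs_nonneg _
  have h1 : |∑ i ∈ s, b i * K i| ≤ ∑ i ∈ s, |K i| * |b i| :=
    (Finset.abs_sum_le_sum_abs _ _).trans (le_of_eq (Finset.sum_congr rfl fun i _ => by rw [abs_mul, mul_comm]))
  have h2 := Real.inner_le_weight_mul_Lp_of_nonneg s hp (fun i => |K i|) (fun i => |b i|) (fun i => abs_nonneg _) (fun i => abs_nonneg _)
  have h3 : 0 ≤ ∑ i ∈ s, |K i| * |b i| ^ p := Finset.sum_nonneg fun i _ => by positivity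
  calc |∑ i ∈ s, b i * K i| ^ p ≤ ((∑ i ∈ s, |K i|) ^ (1 - p⁻¹) * (∑ i ∈ s, |K i| * |b i| ^ p) ^ p⁻¹) ^ p :=
        Real.rpow_le_rpow (abs_nonneg _) (h1.trans h2) hp0.le
    _ = (∑ i ∈ s, |K i|) ^ (p - 1) * ∑ i ∈ s, |K i| * |b i| ^ p := by
        rw [Real.mul_rpow (by positivity) (by positivity), ← Real.rpow_mul h0, ← Real.rpow_mul h3]
        congr 2
        · field_simp
        · rw [inv_mul_cancel₀ hp0.ne', Real.rpow_one]
    _ ≤ _ := by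
        gcongr

lemma tangent {p u c : ℝ} (hp : 1 ≤ p) (hu : 0 ≤ u) (hc : 0 < c) :
    c ^ p + p * c ^ (p - 1) * (u - c) ≤ u ^ p := by
  have h := one_add_mul_self_le_rpow_one_add (s := u / c - 1) (by have : 0 ≤ u / c := by positivity
                                                                  linarith) hp
  rw [add_sub_cancel, Real.div_rpow hu hc.le, le_div_iff₀ (by positivity)] at h
  rw [Real.rpow_sub_one hc.ne']
  refine le_trans (le_of_eq ?_) h
  field_simp

lemma jensen_int {A g : ℝ → ℝ} (hA : Continuous A) (hg : Continuous g) (hA0 : ∀ t, 0 ≤ A t) (hg0 : ∀ t, 0 ≤ g t)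
    {p a b B : ℝ} (hab : a ≤ b) (hp : 1 ≤ p) (hB : 0 < B) (hint : ∫ t in a..b, A t = B) :
    (∫ t in a..b, A t * g t) ^ p ≤ B ^ (p - 1) * ∫ t in a..b, A t * g t ^ p := by
  have hp0 : 0 < p := by linarith
  have hgp : Continuous fun t => g t ^ p := hg.rpow_const fun _ => Or.inr hp0.le
  have hR : 0 ≤ ∫ t in a..b, A t * g t ^ p :=
    intervalIntegral.integral_nonneg hab fun t _ => mul_nonneg (hA0 t) (Real.rpow_nonneg (hg0 t) p)
  have hI : 0 ≤ ∫ t in a..b, A t * g t :=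
    intervalIntegral.integral_nonneg hab fun t _ => mul_nonneg (hA0 t) (hg0 t)
  set I := ∫ t in a..b, A t * g t with hIdef
  rcases hI.eq_or_lt with h0 | h0
  · rw [← h0, Real.zero_rpow hp0.ne']; positivity
  · set c := I / B with hc
    have hc0 : 0 < c := by positivity
    have hm : ∫ t in a..b, ((c ^ p - p * c ^ (p - 1) * c) * A t + p * c ^ (p - 1) * (A t * g t)) ≤ ∫ t in a..b, A t * g t ^ p := by
      apply intervalIntegral.integral_mono_on hab
      · apply Continuous.intervalIntegrable; fun_prop
      · apply Continuous.intervalIntegrable; fun_prop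
      · intro t _
        have := mul_le_mul_of_nonneg_left (tangent hp (hg0 t) hc0) (hA0 t)
        linarith
    rw [intervalIntegral.integral_add (by apply Continuous.intervalIntegrable; fun_prop) (by apply Continuous.intervalIntegrable; fun_prop),
      intervalIntegral.integral_const_mul, intervalIntegral.integral_const_mul, hint, ← hIdef] at hm
    have hIB : I = c * B := by rw [hc]; field_simp
    have : c ^ p * B ≤ ∫ t in a..b, A t * g t ^ p := by
      refine le_trans (le_of_eq ?_) hm
      rw [hIB]; ring
    calc I ^ p = B ^ (p - 1) * (c ^ p * B) := by
          rw [hIB, Real.mul_rpow hc0.le hB.le, Real.rpow_sub_one hB.ne']; field_simp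
      _ ≤ _ := by gcongr

lemma schur_int {ι : Type*} (s : Finset ι) (K : ι → ℝ → ℝ) (hK : ∀ i, Continuous (K i)) (b : ι → ℝ) {p B B' : ℝ}
    (hp : 1 ≤ p) (hB0 : 0 ≤ B) (hB : ∀ φ, ∑ i ∈ s, |K i φ| ≤ B) (hB' : ∀ i ∈ s, ∫ φ in (0 : ℝ)..π, |K i φ| ≤ B') :
    ∫ φ in (0 : ℝ)..π, |∑ i ∈ s, b i * K i φ| ^ p ≤ B ^ (p - 1) * (B' * ∑ i ∈ s, |b i| ^ p) := by
  have hp0 : 0 < p := by linarith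
  have hc1 : Continuous fun φ => |∑ i ∈ s, b i * K i φ| ^ p := by
    refine Continuous.rpow_const ?_ fun _ => Or.inr hp0.le
    exact (continuous_finsetSum _ fun i _ => continuous_const.mul (hK i)).abs
  have hc2 : Continuous fun φ => ∑ i ∈ s, |K i φ| * |b i| ^ p :=
    continuous_finsetSum _ fun i _ => (hK i).abs.mul continuous_const
  calc ∫ φ in (0 : ℝ)..π, |∑ i ∈ s, b i * K i φ| ^ p
      ≤ ∫ φ in (0 : ℝ)..π, B ^ (p - 1) * ∑ i ∈ s, |K i φ| * |b i| ^ p :=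
        intervalIntegral.integral_mono_on Real.pi_pos.le (hc1.intervalIntegrable _ _)
          ((continuous_const.mul hc2).intervalIntegrable _ _) fun φ _ => jensen_sum s (fun i => K i φ) b hp (hB φ)
    _ = B ^ (p - 1) * ∑ i ∈ s, (∫ φ in (0 : ℝ)..π, |K i φ|) * |b i| ^ p := by
        rw [intervalIntegral.integral_const_mul, intervalIntegral.integral_finsetSum (f := fun i φ => |K i φ| * |b i| ^ p)
          fun i _ => ((hK i).abs.mul continuous_const).intervalIntegrable _ _]
        simp only [intervalIntegral.integral_mul_const]
    _ ≤ _ := by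
        rw [Finset.mul_sum (a := B')]
        gcongr with i hi
        exact hB' i hi

lemma schur_sum {ι κ : Type*} (s : Finset ι) (u : Finset κ) (K : ι → κ → ℝ) (b : ι → ℝ) {p B B' : ℝ}
    (hp : 1 ≤ p) (hB0 : 0 ≤ B) (hB : ∀ h ∈ u, ∑ i ∈ s, |K i h| ≤ B) (hB' : ∀ i ∈ s, ∑ h ∈ u, |K i h| ≤ B') :
    ∑ h ∈ u, |∑ i ∈ s, b i * K i h| ^ p ≤ B ^ (p - 1) * (B' * ∑ i ∈ s, |b i| ^ p) := by
  calc ∑ h ∈ u, |∑ i ∈ s, b i * K i h| ^ p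
      ≤ ∑ h ∈ u, B ^ (p - 1) * ∑ i ∈ s, |K i h| * |b i| ^ p :=
        Finset.sum_le_sum fun h hh => jensen_sum s (fun i => K i h) b hp (hB h hh)
    _ = B ^ (p - 1) * ∑ i ∈ s, (∑ h ∈ u, |K i h|) * |b i| ^ p := by
        rw [← Finset.mul_sum, Finset.sum_comm]
        simp only [Finset.sum_mul]
    _ ≤ _ := by
        rw [Finset.mul_sum (a := B')]
        gcongr with i hi
        exact hB' i hi

/-! ### Reproducing formula -/

/-- The reproducing kernel. -/
noncomputable def repV (N : ℕ) (t : ℝ) : ℝ := (1 / (N : ℝ)) * ∑ r ∈ Finset.range N, dirK (N + r) t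

lemma repV_eq (N : ℕ) (t : ℝ) : repV N t = (1 / (N : ℝ)) * (fejQ (2 * N) t - fejQ N t) := by
  unfold repV fejQ
  rw [two_mul, Finset.sum_range_add]; ring

lemma repV_continuous (N : ℕ) : Continuous (repV N) := by
  unfold repV; exact continuous_const.mul (continuous_finsetSum _ fun r _ => dirK_continuous _)

lemma abs_repV_le (N : ℕ) (t : ℝ) : |repV N t| ≤ 5 * fejK N t := by
  rw [repV_eq]
  unfold fejK
  have h1 := fejQ_nonneg N t
  have h2 := fejQ_nonneg (2 * N) t
  have h3 := fejQ_two_mul N t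
  rw [abs_mul, abs_of_nonneg (by positivity : (0 : ℝ) ≤ 1 / N), mul_left_comm]
  gcongr
  rw [abs_le]; constructor <;> linarith

lemma integral_cos_mul (s k : ℕ) (c φ : ℝ) :
    ∫ t in (0 : ℝ)..(2 * π), Real.cos (s * t + c) * (2 * Real.cos ((k + 1 : ℕ) * (φ - t))) =
      if s = k + 1 then 2 * π * Real.cos (s * φ + c) else 0 := by
  have e : ∀ t : ℝ, Real.cos (s * t + c) * (2 * Real.cos ((k + 1 : ℕ) * (φ - t))) =
      Real.cos (((s + (k + 1 : ℕ) : ℤ) : ℝ) * t + (c - (k + 1 : ℕ) * φ)) + Real.cos (((s - (k + 1 : ℕ) : ℤ) : ℝ) * t + (c + (k + 1 : ℕ) * φ)) := by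
    intro t
    have e1 : ((s + (k + 1 : ℕ) : ℤ) : ℝ) * t + (c - (k + 1 : ℕ) * φ) = (s * t + c) - ((k + 1 : ℕ) * (φ - t)) := by push_cast; ring
    have e2 : ((s - (k + 1 : ℕ) : ℤ) : ℝ) * t + (c + (k + 1 : ℕ) * φ) = (s * t + c) + ((k + 1 : ℕ) * (φ - t)) := by push_cast; ring
    rw [e1, e2, Real.cos_sub (s * t + c), Real.cos_add (s * t + c)]; ring
  simp only [e]
  rw [intervalIntegral.integral_add (by apply Continuous.intervalIntegrable; fun_prop) (by apply Continuous.intervalIntegrable; fun_prop),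
    integral_cos_full (by omega), zero_add]
  split_ifs with h
  · subst h
    simp [add_comm]
  · rw [integral_cos_full (by omega)]

lemma dirK_repr (s r : ℕ) (c φ : ℝ) :
    ∫ t in (0 : ℝ)..(2 * π), Real.cos (s * t + c) * dirK r (φ - t) =
      if s ≤ r then 2 * π * Real.cos (s * φ + c) else 0 := by
  induction r with
  | zero =>
    simp only [dirK, Finset.range_zero, Finset.sum_empty, add_zero, mul_one]
    split_ifs with h
    · have : s = 0 := by omega
      subst this; simp
    · have := integral_cos_full (a := (s : ℤ)) (by omega) c
      simpa using this
  | succ r ih =>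
    simp only [dirK_succ, mul_add]
    have := dirK_continuous r
    have h2 := integral_cos_mul s r c φ
    simp only [mul_sub] at h2 ih ⊢
    rw [intervalIntegral.integral_add (by apply Continuous.intervalIntegrable; fun_prop) (by apply Continuous.intervalIntegrable; fun_prop),
      ih, h2]
    split_ifs <;> first | omega | simp

/-- Functions reproduced by `repV N`. -/
structure TrigRep (N : ℕ) (f : ℝ → ℝ) : Prop where
  cont : Continuous f
  rep : ∀ φ, ∫ t in (0 : ℝ)..(2 * π), f t * repV N (φ - t) = 2 * π * f φ

lemma TrigRep.cos {N : ℕ} (hN : 0 < N) {s : ℕ} (hs : s ≤ N) (c : ℝ) : TrigRep N (fun t => Real.cos (s * t + c)) where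
  cont := by fun_prop
  rep φ := by
    have hN' : (N : ℝ) ≠ 0 := by positivity
    unfold repV
    have : ∀ t : ℝ, Real.cos (s * t + c) * ((1 / (N : ℝ)) * ∑ r ∈ Finset.range N, dirK (N + r) (φ - t)) =
        (1 / (N : ℝ)) * ∑ r ∈ Finset.range N, Real.cos (s * t + c) * dirK (N + r) (φ - t) := by
      intro t; rw [Finset.mul_sum, Finset.mul_sum, Finset.mul_sum]; refine Finset.sum_congr rfl fun r _ => by ring
    simp only [this]
    rw [intervalIntegral.integral_const_mul, intervalIntegral.integral_finsetSum]
    · rw [Finset.sum_congr rfl fun r _ => (dirK_repr s (N + r) c φ).trans (if_pos (by omega))]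
      simp; field_simp
    · intro r _
      have := dirK_continuous (N + r)
      apply Continuous.intervalIntegrable; fun_prop

lemma TrigRep.add {N : ℕ} {f g : ℝ → ℝ} (hf : TrigRep N f) (hg : TrigRep N g) : TrigRep N (fun t => f t + g t) where
  cont := hf.cont.add hg.cont
  rep φ := by
    have h1 := hf.cont
    have h2 := hg.cont
    have := repV_continuous N
    simp only [add_mul]
    rw [intervalIntegral.integral_add (by apply Continuous.intervalIntegrable; fun_prop) (by apply Continuous.intervalIntegrable; fun_prop),
      hf.rep, hg.rep]; ring

lemma TrigRep.smul {N : ℕ} {f : ℝ → ℝ} (a : ℝ) (hf : TrigRep N f) : TrigRep N (fun t => a * f t) where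
  cont := continuous_const.mul hf.cont
  rep φ := by
    simp only [mul_assoc]
    rw [intervalIntegral.integral_const_mul, hf.rep]; ring

lemma TrigRep.zero (N : ℕ) : TrigRep N (fun _ => 0) where
  cont := continuous_const
  rep φ := by simp

lemma TrigRep.sum {N : ℕ} {ι : Type*} (s : Finset ι) {f : ι → ℝ → ℝ} (hf : ∀ i ∈ s, TrigRep N (f i)) :
    TrigRep N (fun t => ∑ i ∈ s, f i t) := by
  classical
  induction s using Finset.induction_on with
  | empty => simpa using TrigRep.zero N
  | insert a s ha ih =>
    simp only [Finset.sum_insert ha]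
    exact (hf a (Finset.mem_insert_self a s)).add (ih fun i hi => hf i (Finset.mem_insert_of_mem hi))

lemma TrigRep.dirK {N r : ℕ} (hN : 0 < N) (hr : r ≤ N) (c : ℝ) : TrigRep N (fun t => dirK r (c + t)) := by
  unfold _root_.dirK
  refine TrigRep.add ?_ (TrigRep.sum _ fun s hs => TrigRep.smul 2 ?_)
  · simpa using TrigRep.cos hN (s := 0) (by omega) 0
  · have := TrigRep.cos hN (s := s + 1) (by have := Finset.mem_range.mp hs; omega) ((s + 1 : ℕ) * c)
    simp only [mul_add]
    simpa only [add_comm] using this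

lemma TrigRep.fejQ {N M : ℕ} (hN : 0 < N) (hr : M ≤ N) (c : ℝ) : TrigRep N (fun t => fejQ M (c + t)) := by
  unfold _root_.fejQ
  exact TrigRep.sum _ fun r h => TrigRep.dirK hN (by have := Finset.mem_range.mp h; omega) c

lemma TrigRep.vpG {N n m : ℕ} (hN : 0 < N) (h : n + m ≤ N) (c : ℝ) : TrigRep N (fun t => vpG n m (c + t)) := by
  unfold _root_.vpG
  simp only [sub_eq_add_neg, ← neg_one_mul (_root_.fejQ (n - m) _)]
  exact ((TrigRep.fejQ hN h c).add ((TrigRep.fejQ hN (by omega) c).smul (-1))).smul _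

lemma TrigRep.sc {N n m : ℕ} (hN : 0 < N) (h : n + m ≤ N) (k : ℕ) : TrigRep N (sc n m k) := by
  have : _root_.sc n m k = fun t => (1 / (n : ℝ)) * (_root_.vpG n m (-ang n k + t) + _root_.vpG n m (ang n k + t)) := by
    funext t
    unfold _root_.sc
    rw [← vpG_even n m (ang n k - t)]; congr 3; ring
  rw [this]
  exact ((TrigRep.vpG hN h _).add (TrigRep.vpG hN h _)).smul _

/-! ### The wavelet expansion in the angle variable -/

lemma sum_sub_le {S T : Finset ℕ} (f : ℕ → ℕ) (hf : Set.InjOn f S) (hST : ∀ k ∈ S, f k ∈ T) (g : ℕ → ℝ)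
    (hg : ∀ j, 0 ≤ g j) : ∑ k ∈ S, g (f k) ≤ ∑ j ∈ T, g j := by
  rw [← Finset.sum_image (f := g) hf]
  refine Finset.sum_le_sum_of_subset_of_nonneg ?_ fun j _ _ => hg j
  intro j hj
  obtain ⟨k, hk, rfl⟩ := Finset.mem_image.mp hj
  exact hST k hk

lemma sum_kap_le (n : ℕ) (g : ℕ → ℝ) (hg : ∀ j, 0 ≤ g j) :
    ∑ k ∈ Finset.Icc 1 (2 * n), g (3 * k / 2) ≤ ∑ j ∈ Finset.Icc 1 (3 * n), g j := by
  refine sum_sub_le (fun k => 3 * k / 2) ?_ ?_ g hg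
  · intro a _ b _ h
    simp only at h
    omega
  · intro k hk
    simp only [Finset.mem_Icc] at hk ⊢
    omega

lemma sum_mid_le (n : ℕ) (g : ℕ → ℝ) (hg : ∀ j, 0 ≤ g j) :
    ∑ h ∈ Finset.Icc 1 n, g (3 * h - 1) ≤ ∑ j ∈ Finset.Icc 1 (3 * n), g j := by
  refine sum_sub_le (fun h => 3 * h - 1) ?_ ?_ g hg
  · intro a ha b hb h
    simp only [Finset.coe_Icc, Set.mem_Icc] at h ha hb
    omega
  · intro k hk
    simp only [Finset.mem_Icc] at hk ⊢
    omega

/-- Coefficients at the coarse nodes. -/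
noncomputable def coefA (n m : ℕ) (b : ℕ → ℝ) (h : ℕ) : ℝ :=
  ∑ k ∈ Finset.Icc 1 (2 * n), b k * sc n m h (ang (3 * n) (3 * k / 2))

/-- The two parts of the expansion. -/
noncomputable def partU (n m : ℕ) (b : ℕ → ℝ) (φ : ℝ) : ℝ :=
  ∑ k ∈ Finset.Icc 1 (2 * n), b k * sc (3 * n) m (3 * k / 2) φ

/-- The second part of the expansion. -/
noncomputable def partV (n m : ℕ) (b : ℕ → ℝ) (φ : ℝ) : ℝ :=
  ∑ h ∈ Finset.Icc 1 n, coefA n m b h * sc (3 * n) m (3 * h - 1) φ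

/-- The expansion in the angle variable. -/
noncomputable def fext (n m : ℕ) (b : ℕ → ℝ) (φ : ℝ) : ℝ := partU n m b φ - partV n m b φ

lemma wav_cos {n m k : ℕ} (hm : 0 < m) (hmn : m < n) (hk : 1 ≤ k) (hkn : k ≤ 2 * n) {φ : ℝ} (hφ : φ ∈ Set.Icc 0 π) :
    wav n m k (Real.cos φ) = sc (3 * n) m (3 * k / 2) φ -
      ∑ h ∈ Finset.Icc 1 n, sc n m h (ang (3 * n) (3 * k / 2)) * sc (3 * n) m (3 * h - 1) φ := by
  have hn : 0 < n := by omega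
  have hn' : (n : ℝ) ≠ 0 := by positivity
  unfold wav
  have key : ∀ j, 1 ≤ j → j ≤ 3 * n → (π / (3 * (n : ℝ))) * vpK (3 * n) m (chebNode (3 * n) j) (Real.cos φ) = sc (3 * n) m j φ := by
    intro j h1 h2
    rw [← scal_cos hm (by omega) h1 h2 hφ]
    unfold scal; push_cast; rfl
  congr 1
  · exact key _ (by omega) (by omega)
  · refine Finset.sum_congr rfl fun h hh => ?_
    have hh := Finset.mem_Icc.mp hh
    have e : chebNode n h = chebNode (3 * n) (3 * h - 1) := by
      unfold chebNode
      congr 1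
      rw [Nat.cast_sub (by omega)]
      push_cast; field_simp; ring
    rw [e, key _ (by omega) (by omega)]
    congr 1
    exact scal_cos hm hn hh.1 hh.2 (ang_mem (by omega) (by omega))

lemma sum_wav_cos {n m : ℕ} (hm : 0 < m) (hmn : m < n) (b : ℕ → ℝ) {φ : ℝ} (hφ : φ ∈ Set.Icc 0 π) :
    ∑ k ∈ Finset.Icc 1 (2 * n), b k * wav n m k (Real.cos φ) = fext n m b φ := by
  rw [Finset.sum_congr rfl fun k hk => by
    rw [wav_cos hm hmn (Finset.mem_Icc.mp hk).1 (Finset.mem_Icc.mp hk).2 hφ]]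
  unfold fext partU partV coefA
  simp only [mul_sub, Finset.sum_sub_distrib, Finset.mul_sum, Finset.sum_mul]
  congr 1
  rw [Finset.sum_comm]
  refine Finset.sum_congr rfl fun h _ => Finset.sum_congr rfl fun k _ => by ring

lemma fext_node {n m j : ℕ} (hm : 0 < m) (hmn : m < n) (b : ℕ → ℝ) (hj : 1 ≤ j) (hjn : j ≤ 2 * n) :
    fext n m b (ang (3 * n) (3 * j / 2)) = b j := by
  unfold fext partU partV
  have h1 : ∀ k ∈ Finset.Icc 1 (2 * n), b k * sc (3 * n) m (3 * k / 2) (ang (3 * n) (3 * j / 2)) = if k = j then b k else 0 := by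
    intro k hk
    have hk := Finset.mem_Icc.mp hk
    rw [sc_interp hm (by omega) (by omega) (by omega) (by omega) (by omega)]
    by_cases h : k = j
    · simp [h]
    · rw [if_neg (by omega), if_neg h, mul_zero]
  have h2 : ∀ h ∈ Finset.Icc 1 n, coefA n m b h * sc (3 * n) m (3 * h - 1) (ang (3 * n) (3 * j / 2)) = 0 := by
    intro h hh
    have hh := Finset.mem_Icc.mp hh
    rw [sc_interp hm (by omega) (by omega) (by omega) (by omega) (by omega), if_neg (by omega), mul_zero]
  rw [Finset.sum_congr rfl h1, Finset.sum_congr rfl h2, Finset.sum_ite_eq']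
  simp [hj, hjn]

lemma fext_rep {n m : ℕ} (hmn : m < n) (b : ℕ → ℝ) : TrigRep (4 * n) (fext n m b) := by
  have : fext n m b = fun φ => partU n m b φ + (-1) * partV n m b φ := by
    funext φ; unfold fext; ring
  rw [this]
  refine TrigRep.add ?_ (TrigRep.smul _ ?_)
  · exact TrigRep.sum _ fun k _ => (TrigRep.sc (by omega) (by omega) _).smul _
  · exact TrigRep.sum _ fun k _ => (TrigRep.sc (by omega) (by omega) _).smul _

lemma fext_even (n m : ℕ) (b : ℕ → ℝ) (φ : ℝ) : fext n m b (-φ) = fext n m b φ := by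
  unfold fext partU partV; simp only [sc_even]

lemma fext_per (n m : ℕ) (b : ℕ → ℝ) : Function.Periodic (fext n m b) (2 * π) := by
  intro φ
  unfold fext partU partV
  simp only [sc_per _ _ _ φ]

/-! ### The bounds -/

lemma big_bounds {n m : ℕ} (hm : 0 < m) (hmn : m < n) {W : ℝ} (hW : W = 1 + Real.log ((n : ℝ) / m)) :
    1 ≤ W ∧ (∀ φ, ∑ j ∈ Finset.Icc 1 (3 * n), |sc (3 * n) m j φ| ≤ 6 * W) ∧
    (∀ j, ∫ φ in (0 : ℝ)..π, |sc (3 * n) m j φ| ≤ 2 * π * W / n) ∧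
    (∀ φ, ∑ h ∈ Finset.Icc 1 n, |sc n m h φ| ≤ 2 * W) ∧
    (∀ h, ∑ j ∈ Finset.Icc 1 (3 * n), |sc n m h (ang (3 * n) j)| ≤ 6 * W) := by
  have hm' : (0 : ℝ) < m := by positivity
  have hn : 0 < n := by omega
  have hn' : (0 : ℝ) < n := by positivity
  have hle : (m : ℝ) ≤ n := by exact_mod_cast hmn.le
  have h0 : 0 ≤ Real.log ((n : ℝ) / m) := Real.log_nonneg (by rw [le_div_iff₀ hm']; linarith)
  obtain ⟨W1, hW1, a1, a2, a3⟩ := sc_bounds hm hmn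
  obtain ⟨W2, hW2, b1, b2, b3⟩ := sc_bounds hm (by omega : m < 3 * n)
  have e : (((3 * n : ℕ) : ℝ) / m) = 3 * (n / m) := by push_cast; ring
  rw [e, Real.log_mul (by norm_num) (by positivity)] at hW2
  have l3 : Real.log 3 ≤ 3 - 1 := Real.log_le_sub_one_of_pos (by norm_num)
  have hW2' : W2 ≤ 3 * W := by rw [hW]; linarith
  refine ⟨by linarith, fun φ => (b1 φ).trans (by linarith), fun j => (b2 j).trans ?_, fun φ => (a1 φ).trans (by linarith),
    fun h => (a3 h).trans (by linarith)⟩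
  have : 2 * π * W / n = 2 * π * (3 * W) / ((3 * n : ℕ) : ℝ) := by push_cast; field_simp
  rw [this]
  have := Real.pi_pos
  gcongr

lemma coefA_sup {n m : ℕ} (hm : 0 < m) (hmn : m < n) {W : ℝ} (hW : W = 1 + Real.log ((n : ℝ) / m)) (b : ℕ → ℝ)
    {M : ℝ} (hM : 0 ≤ M) (hb : ∀ k ∈ Finset.Icc 1 (2 * n), |b k| ≤ M) (h : ℕ) : |coefA n m b h| ≤ 6 * W * M := by
  obtain ⟨_, _, _, _, c4⟩ := big_bounds hm hmn hW
  unfold coefA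
  calc _ ≤ ∑ k ∈ Finset.Icc 1 (2 * n), M * |sc n m h (ang (3 * n) (3 * k / 2))| := by
        refine (Finset.abs_sum_le_sum_abs _ _).trans (Finset.sum_le_sum fun k hk => ?_)
        rw [abs_mul]; gcongr; exact hb k hk
    _ ≤ M * (6 * W) := by
        rw [← Finset.mul_sum]
        gcongr
        exact (sum_kap_le n (fun j => |sc n m h (ang (3 * n) j)|) fun j => abs_nonneg _).trans (c4 h)
    _ = _ := by ring

lemma fext_sup {n m : ℕ} (hm : 0 < m) (hmn : m < n) {W : ℝ} (hW : W = 1 + Real.log ((n : ℝ) / m)) (b : ℕ → ℝ)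
    {M : ℝ} (hM : 0 ≤ M) (hb : ∀ k ∈ Finset.Icc 1 (2 * n), |b k| ≤ M) (φ : ℝ) : |fext n m b φ| ≤ 144 * W ^ 2 * M := by
  obtain ⟨c0, c1, _, _, _⟩ := big_bounds hm hmn hW
  have hU : |partU n m b φ| ≤ M * (6 * W) := by
    unfold partU
    calc _ ≤ ∑ k ∈ Finset.Icc 1 (2 * n), M * |sc (3 * n) m (3 * k / 2) φ| := by
          refine (Finset.abs_sum_le_sum_abs _ _).trans (Finset.sum_le_sum fun k hk => ?_)
          rw [abs_mul]; gcongr; exact hb k hk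
      _ ≤ M * (6 * W) := by
          rw [← Finset.mul_sum]
          gcongr
          exact (sum_kap_le n (fun j => |sc (3 * n) m j φ|) fun j => abs_nonneg _).trans (c1 φ)
  have hV : |partV n m b φ| ≤ 6 * W * M * (6 * W) := by
    unfold partV
    calc _ ≤ ∑ h ∈ Finset.Icc 1 n, 6 * W * M * |sc (3 * n) m (3 * h - 1) φ| := by
          refine (Finset.abs_sum_le_sum_abs _ _).trans (Finset.sum_le_sum fun k hk => ?_)
          rw [abs_mul]; gcongr; exact coefA_sup hm hmn hW b hM hb k
      _ ≤ 6 * W * M * (6 * W) := by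
          rw [← Finset.mul_sum]
          gcongr
          exact (sum_mid_le n (fun j => |sc (3 * n) m j φ|) fun j => abs_nonneg _).trans (c1 φ)
  have : |fext n m b φ| ≤ |partU n m b φ| + |partV n m b φ| := abs_sub _ _
  have h1 : W ≤ W ^ 2 := by nlinarith
  have h2 := mul_le_mul_of_nonneg_left h1 hM
  have h3 : 0 ≤ M * W ^ 2 := by positivity
  nlinarith

lemma abs_sub_rpow_le (u v : ℝ) {p : ℝ} (hp : 1 ≤ p) : |u - v| ^ p ≤ 2 ^ p * (|u| ^ p + |v| ^ p) := by
  have hp0 : 0 ≤ p := by linarith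
  have hu : 0 ≤ |u| ^ p := by positivity
  have hv : 0 ≤ |v| ^ p := by positivity
  have h : |u - v| ≤ |u| + |v| := abs_sub _ _
  rcases le_total |u| |v| with hh | hh
  · calc |u - v| ^ p ≤ (2 * |v|) ^ p := Real.rpow_le_rpow (abs_nonneg _) (by linarith) hp0
      _ = 2 ^ p * |v| ^ p := Real.mul_rpow (by norm_num) (abs_nonneg _)
      _ ≤ _ := by gcongr; linarith
  · calc |u - v| ^ p ≤ (2 * |u|) ^ p := Real.rpow_le_rpow (abs_nonneg _) (by linarith) hp0
      _ = 2 ^ p * |u| ^ p := Real.mul_rpow (by norm_num) (abs_nonneg _)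
      _ ≤ _ := by gcongr; linarith

lemma upper_p {n m : ℕ} (hm : 0 < m) (hmn : m < n) {W : ℝ} (hW : W = 1 + Real.log ((n : ℝ) / m)) (b : ℕ → ℝ)
    {p : ℝ} (hp : 1 ≤ p) : ∫ φ in (0 : ℝ)..π, |fext n m b φ| ^ p ≤
      (144 * W ^ 2) ^ p * (π / (2 * (n : ℝ)) * ∑ k ∈ Finset.Icc 1 (2 * n), |b k| ^ p) := by
  obtain ⟨c0, c1, c2, c3, c4⟩ := big_bounds hm hmn hW
  have hp0 : 0 < p := by linarith
  have hn : 0 < n := by omega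
  have hn' : (0 : ℝ) < n := by positivity
  have hpi := Real.pi_pos
  have hW0 : 0 < 6 * W := by linarith
  set S := ∑ k ∈ Finset.Icc 1 (2 * n), |b k| ^ p with hS
  have hS0 : 0 ≤ S := Finset.sum_nonneg fun k _ => by positivity
  have cU : Continuous (partU n m b) :=
    continuous_finsetSum _ fun i _ => continuous_const.mul (sc_continuous _ _ _)
  have cV : Continuous (partV n m b) :=
    continuous_finsetSum _ fun i _ => continuous_const.mul (sc_continuous _ _ _)
  have hpow : (6 * W) ^ p = (6 * W) ^ (p - 1) * (6 * W) := by
    rw [Real.rpow_sub_one hW0.ne']; field_simp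
  have hU : ∫ φ in (0 : ℝ)..π, |partU n m b φ| ^ p ≤ (6 * W) ^ p * (π / (3 * n) * S) := by
    have := schur_int (Finset.Icc 1 (2 * n)) (fun k => sc (3 * n) m (3 * k / 2)) (fun k => sc_continuous _ _ _) b hp hW0.le
      (fun φ => (sum_kap_le n (fun j => |sc (3 * n) m j φ|) fun j => abs_nonneg _).trans (c1 φ)) (fun k _ => c2 _)
    refine this.trans (le_of_eq ?_)
    rw [hpow]; field_simp; ring
  have hA : ∑ h ∈ Finset.Icc 1 n, |coefA n m b h| ^ p ≤ (6 * W) ^ p * S := by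
    have := schur_sum (Finset.Icc 1 (2 * n)) (Finset.Icc 1 n) (fun k h => sc n m h (ang (3 * n) (3 * k / 2))) b hp hW0.le
      (fun h _ => (sum_kap_le n (fun j => |sc n m h (ang (3 * n) j)|) fun j => abs_nonneg _).trans (c4 h)) (fun k _ => c3 _)
    refine this.trans ?_
    rw [hpow, ← hS]
    calc (6 * W) ^ (p - 1) * (2 * W * S) ≤ (6 * W) ^ (p - 1) * (6 * W * S) :=
          mul_le_mul_of_nonneg_left (mul_le_mul_of_nonneg_right (by linarith) hS0)
            (Real.rpow_nonneg hW0.le _)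
      _ = (6 * W) ^ (p - 1) * (6 * W) * S := by ring
  have hV : ∫ φ in (0 : ℝ)..π, |partV n m b φ| ^ p ≤ (6 * W) ^ p * (π / (3 * n) * ((6 * W) ^ p * S)) := by
    have := schur_int (Finset.Icc 1 n) (fun h => sc (3 * n) m (3 * h - 1)) (fun k => sc_continuous _ _ _) (coefA n m b) hp hW0.le
      (fun φ => (sum_mid_le n (fun j => |sc (3 * n) m j φ|) fun j => abs_nonneg _).trans (c1 φ)) (fun k _ => c2 _)
    refine this.trans ?_
    calc _ = (6 * W) ^ p * (π / (3 * n) * ∑ h ∈ Finset.Icc 1 n, |coefA n m b h| ^ p) := by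
          rw [hpow]; field_simp; ring
      _ ≤ _ := by gcongr
  have i1 : Continuous fun φ => |partU n m b φ| ^ p := cU.abs.rpow_const fun _ => Or.inr hp0.le
  have i2 : Continuous fun φ => |partV n m b φ| ^ p := cV.abs.rpow_const fun _ => Or.inr hp0.le
  have i3 : Continuous fun φ => |fext n m b φ| ^ p := (cU.sub cV).abs.rpow_const fun _ => Or.inr hp0.le
  have one6 : (1 : ℝ) ≤ (6 * W) ^ p := Real.one_le_rpow (by linarith) hp0.le
  have two2 : (2 : ℝ) ≤ 2 ^ p := by
    calc (2 : ℝ) = 2 ^ (1 : ℝ) := (Real.rpow_one _).symm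
      _ ≤ 2 ^ p := Real.rpow_le_rpow_of_exponent_le (by norm_num) hp
  have hsplit : (144 * W ^ 2) ^ p = 2 ^ p * 2 ^ p * ((6 * W) ^ p * (6 * W) ^ p) := by
    rw [← Real.mul_rpow (by norm_num) (by norm_num), ← Real.mul_rpow hW0.le hW0.le, ← Real.mul_rpow (by norm_num) (by positivity)]
    congr 1; ring
  have hX : π / (3 * n) * S * 2 ≤ 2 ^ p * (π / (2 * n) * S) := by
    have h0 : 0 ≤ π / (2 * n) * S := by positivity
    have h1 : π / (3 * n) * S ≤ π / (2 * n) * S := by gcongr; norm_num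
    nlinarith
  calc ∫ φ in (0 : ℝ)..π, |fext n m b φ| ^ p
      ≤ ∫ φ in (0 : ℝ)..π, 2 ^ p * (|partU n m b φ| ^ p + |partV n m b φ| ^ p) :=
        intervalIntegral.integral_mono_on hpi.le (i3.intervalIntegrable _ _)
          ((continuous_const.mul (i1.add i2)).intervalIntegrable _ _) fun φ _ => abs_sub_rpow_le _ _ hp
    _ = 2 ^ p * ((∫ φ in (0 : ℝ)..π, |partU n m b φ| ^ p) + ∫ φ in (0 : ℝ)..π, |partV n m b φ| ^ p) := by
        rw [intervalIntegral.integral_const_mul, intervalIntegral.integral_add (i1.intervalIntegrable _ _) (i2.intervalIntegrable _ _)]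
    _ ≤ 2 ^ p * ((6 * W) ^ p * (π / (3 * n) * S) + (6 * W) ^ p * (π / (3 * n) * ((6 * W) ^ p * S))) := by gcongr
    _ = 2 ^ p * (6 * W) ^ p * (π / (3 * n) * S) * (1 + (6 * W) ^ p) := by ring
    _ ≤ 2 ^ p * (6 * W) ^ p * (π / (3 * n) * S) * (2 * (6 * W) ^ p) := by gcongr; linarith
    _ = 2 ^ p * ((6 * W) ^ p * (6 * W) ^ p) * (π / (3 * n) * S * 2) := by ring
    _ ≤ 2 ^ p * ((6 * W) ^ p * (6 * W) ^ p) * (2 ^ p * (π / (2 * n) * S)) := by gcongr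
    _ = _ := by rw [hsplit]; ring

lemma lower_nodes {n : ℕ} (hn : 0 < n) {f : ℝ → ℝ} (hf : TrigRep (4 * n) f) (he : ∀ t, f (-t) = f t)
    (hper : Function.Periodic f (2 * π)) {p : ℝ} (hp : 1 ≤ p) :
    ∑ j ∈ Finset.Icc 1 (3 * n), |f (ang (3 * n) j)| ^ p ≤ 5 ^ p * (6 * n / π) * ∫ φ in (0 : ℝ)..π, |f φ| ^ p := by
  have hp0 : 0 < p := by linarith
  have hpi := Real.pi_pos
  have hn' : (0 : ℝ) < n := by positivity
  have hK := fejK_good (by omega : 0 < 4 * n)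
  set F := fejK (4 * n) with hF
  have cF := hK.cont
  have cf := hf.cont
  have cV := repV_continuous (4 * n)
  have cfp : Continuous fun t => |f t| ^ p := cf.abs.rpow_const fun _ => Or.inr hp0.le
  have pt : ∀ φ, |f φ| ^ p ≤ 5 ^ p / (2 * π) * ∫ t in (0 : ℝ)..(2 * π), F (φ - t) * |f t| ^ p := by
    intro φ
    have hint : ∫ t in (0 : ℝ)..(2 * π), F (φ - t) = 2 * π := by
      rw [intervalIntegral.integral_comp_sub_left (fun x => F x)]
      have := hK.per.intervalIntegral_add_eq (φ - 2 * π) 0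
      rw [zero_add, sub_add_cancel, hK.int] at this
      rw [sub_zero, this, mul_one]
    have h1 : 2 * π * |f φ| ≤ 5 * ∫ t in (0 : ℝ)..(2 * π), F (φ - t) * |f t| := by
      rw [← abs_of_pos (by positivity : 0 < 2 * π), ← abs_mul, abs_of_pos (by positivity : 0 < 2 * π), ← hf.rep φ,
        ← intervalIntegral.integral_const_mul]
      refine (intervalIntegral.abs_integral_le_integral_abs (by positivity)).trans ?_
      apply intervalIntegral.integral_mono_on (by positivity)
      · apply Continuous.intervalIntegrable; fun_prop
      · apply Continuous.intervalIntegrable; fun_prop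
      · intro t _
        rw [abs_mul, mul_comm, ← mul_assoc]
        gcongr
        exact abs_repV_le _ _
    have hI0 : 0 ≤ ∫ t in (0 : ℝ)..(2 * π), F (φ - t) * |f t| :=
      intervalIntegral.integral_nonneg (by positivity) fun t _ => mul_nonneg (hK.nonneg _) (abs_nonneg _)
    have h2 := jensen_int (A := fun t => F (φ - t)) (g := fun t => |f t|) (by fun_prop) (by fun_prop) (fun t => hK.nonneg _)
      (fun t => abs_nonneg _) (by positivity : (0 : ℝ) ≤ 2 * π) hp (by positivity : 0 < 2 * π) hint
    have h3 : |f φ| ≤ 5 / (2 * π) * ∫ t in (0 : ℝ)..(2 * π), F (φ - t) * |f t| := by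
      rw [div_mul_eq_mul_div, le_div_iff₀ (by positivity)]; linarith
    calc |f φ| ^ p ≤ (5 / (2 * π) * ∫ t in (0 : ℝ)..(2 * π), F (φ - t) * |f t|) ^ p := Real.rpow_le_rpow (abs_nonneg _) h3 hp0.le
      _ = 5 ^ p / (2 * π) ^ p * (∫ t in (0 : ℝ)..(2 * π), F (φ - t) * |f t|) ^ p := by
          rw [Real.mul_rpow (by positivity) hI0, Real.div_rpow (by norm_num) (by positivity)]
      _ ≤ 5 ^ p / (2 * π) ^ p * ((2 * π) ^ (p - 1) * ∫ t in (0 : ℝ)..(2 * π), F (φ - t) * |f t| ^ p) := by gcongr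
      _ = _ := by
          rw [Real.rpow_sub_one (by positivity)]; field_simp
  have hgrid : ∀ t, ∑ j ∈ Finset.Icc 1 (3 * n), F (ang (3 * n) j - t) ≤ 6 * n := by
    intro t
    have := fold_sum (by omega : 0 < 3 * n) hK (by omega) t
    calc _ ≤ ∑ j ∈ Finset.Icc 1 (3 * n), (F (ang (3 * n) j - t) + F (ang (3 * n) j + t)) :=
          Finset.sum_le_sum fun j _ => le_add_of_nonneg_right (hK.nonneg _)
      _ = 6 * n := by rw [this]; push_cast; ring
  have hfold : ∫ t in (0 : ℝ)..(2 * π), |f t| ^ p = 2 * ∫ φ in (0 : ℝ)..π, |f φ| ^ p := by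
    have hP : Function.Periodic (fun t => |f t| ^ p) (2 * π) := fun t => by simp only [hper t]
    rw [← fold_int cfp hP 0, ← intervalIntegral.integral_const_mul]
    congr 1; funext t
    simp only [zero_sub, zero_add, he]; ring
  calc ∑ j ∈ Finset.Icc 1 (3 * n), |f (ang (3 * n) j)| ^ p
      ≤ ∑ j ∈ Finset.Icc 1 (3 * n), 5 ^ p / (2 * π) * ∫ t in (0 : ℝ)..(2 * π), F (ang (3 * n) j - t) * |f t| ^ p :=
        Finset.sum_le_sum fun j _ => pt _
    _ = 5 ^ p / (2 * π) * ∫ t in (0 : ℝ)..(2 * π), (∑ j ∈ Finset.Icc 1 (3 * n), F (ang (3 * n) j - t)) * |f t| ^ p := by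
        simp only [Finset.sum_mul]
        rw [← Finset.mul_sum, intervalIntegral.integral_finsetSum]
        intro j _
        apply Continuous.intervalIntegrable; fun_prop
    _ ≤ 5 ^ p / (2 * π) * ∫ t in (0 : ℝ)..(2 * π), 6 * n * |f t| ^ p := by
        gcongr
        apply intervalIntegral.integral_mono_on (by positivity)
        · apply Continuous.intervalIntegrable; fun_prop
        · apply Continuous.intervalIntegrable; fun_prop
        · intro t _
          gcongr
          exact hgrid t
    _ = _ := by
        rw [intervalIntegral.integral_const_mul, hfold]; field_simp

lemma lower_p {n m : ℕ} (hm : 0 < m) (hmn : m < n) (b : ℕ → ℝ) {p : ℝ} (hp : 1 ≤ p) :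
    π / (2 * (n : ℝ)) * ∑ k ∈ Finset.Icc 1 (2 * n), |b k| ^ p ≤ 15 ^ p * ∫ φ in (0 : ℝ)..π, |fext n m b φ| ^ p := by
  have hpi := Real.pi_pos
  have hn : 0 < n := by omega
  have hn' : (0 : ℝ) < n := by positivity
  have h1 : ∑ k ∈ Finset.Icc 1 (2 * n), |b k| ^ p ≤ 5 ^ p * (6 * n / π) * ∫ φ in (0 : ℝ)..π, |fext n m b φ| ^ p := by
    refine le_trans ?_ (lower_nodes hn (fext_rep hmn b) (fext_even n m b) (fext_per n m b) hp)
    refine le_trans (le_of_eq ?_) (sum_kap_le n (fun j => |fext n m b (ang (3 * n) j)| ^ p) fun j => by positivity)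
    refine Finset.sum_congr rfl fun k hk => ?_
    have hk := Finset.mem_Icc.mp hk
    rw [fext_node hm hmn b hk.1 hk.2]
  have hI : 0 ≤ ∫ φ in (0 : ℝ)..π, |fext n m b φ| ^ p :=
    intervalIntegral.integral_nonneg hpi.le fun t _ => by positivity
  have three : (3 : ℝ) ≤ 3 ^ p := by
    calc (3 : ℝ) = 3 ^ (1 : ℝ) := (Real.rpow_one _).symm
      _ ≤ 3 ^ p := Real.rpow_le_rpow_of_exponent_le (by norm_num) hp
  calc _ ≤ π / (2 * (n : ℝ)) * (5 ^ p * (6 * n / π) * ∫ φ in (0 : ℝ)..π, |fext n m b φ| ^ p) := by gcongr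
    _ = 3 * 5 ^ p * ∫ φ in (0 : ℝ)..π, |fext n m b φ| ^ p := by field_simp; ring
    _ ≤ 3 ^ p * 5 ^ p * ∫ φ in (0 : ℝ)..π, |fext n m b φ| ^ p := by gcongr
    _ = _ := by rw [← Real.mul_rpow (by norm_num) (by norm_num)]; norm_num

lemma lpNorm_eq {n m : ℕ} (hm : 0 < m) (hmn : m < n) (b : ℕ → ℝ) (p : ℝ) :
    lpNorm p (fun x => ∑ k ∈ Finset.Icc 1 (2 * n), b k * wav n m k x) =
      (∫ φ in (0 : ℝ)..π, |fext n m b φ| ^ p) ^ (1 / p) := by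
  unfold _root_.lpNorm
  congr 1
  have h1 := Polynomial.Chebyshev.integral_measureT (fun x => |∑ k ∈ Finset.Icc 1 (2 * n), b k * wav n m k x| ^ p)
  rw [Polynomial.Chebyshev.integral_measureT_eq_integral_cos] at h1
  have h2 : ∀ x : ℝ, chebW x = √(1 - x ^ 2)⁻¹ := by
    intro x; unfold chebW; rw [Real.sqrt_inv, one_div]
  simp only [h2]
  rw [← h1]
  apply intervalIntegral.integral_congr
  intro φ hφ
  rw [Set.uIcc_of_le Real.pi_pos.le] at hφ
  simp only [sum_wav_cos hm hmn b hφ]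

lemma rpow_root {K X p : ℝ} (hK : 0 ≤ K) (hX : 0 ≤ X) (hp : 1 ≤ p) : (K ^ p * X) ^ (1 / p) = K * X ^ (1 / p) := by
  rw [Real.mul_rpow (by positivity) hX, ← Real.rpow_mul hK, mul_one_div_cancel (by linarith), Real.rpow_one]

theorem wav_riesz_bounds :
    ∃ C₁ C₂ : ℝ, 0 < C₁ ∧ 0 < C₂ ∧ ∀ n m : ℕ, (hm : 0 < m) → (hmn : m < n) → ∀ b : ℕ → ℝ,
      (∀ p : ℝ, 1 ≤ p →
        C₁ * ((Real.pi / (2 * (n : ℝ)) * ∑ k ∈ Finset.Icc 1 (2 * n), |b k| ^ p) ^ (1 / p)) ≤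
            lpNorm p (fun x => ∑ k ∈ Finset.Icc 1 (2 * n), b k * wav n m k x) ∧
          lpNorm p (fun x => ∑ k ∈ Finset.Icc 1 (2 * n), b k * wav n m k x) ≤
            C₂ * (1 + Real.log ((n : ℝ) / (m : ℝ)) ^ 2) *
              ((Real.pi / (2 * (n : ℝ)) * ∑ k ∈ Finset.Icc 1 (2 * n), |b k| ^ p) ^ (1 / p))) ∧
      (C₁ * ((Finset.Icc 1 (2 * n)).sup' (Finset.nonempty_Icc.mpr (by omega)) fun k => |b k|) ≤
          supNorm (fun x => ∑ k ∈ Finset.Icc 1 (2 * n), b k * wav n m k x) ∧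
        supNorm (fun x => ∑ k ∈ Finset.Icc 1 (2 * n), b k * wav n m k x) ≤
          C₂ * (1 + Real.log ((n : ℝ) / (m : ℝ)) ^ 2) *
            ((Finset.Icc 1 (2 * n)).sup' (Finset.nonempty_Icc.mpr (by omega)) fun k => |b k|)) := by
  refine ⟨1 / 15, 288, by norm_num, by norm_num, fun n m hm hmn b => ⟨fun p hp => ?_, ?_⟩⟩
  · have hp0 : 0 < p := by linarith
    have hpi := Real.pi_pos
    have hI : 0 ≤ ∫ φ in (0 : ℝ)..π, |fext n m b φ| ^ p :=
      intervalIntegral.integral_nonneg hpi.le fun t _ => by positivity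
    have hS : 0 ≤ Real.pi / (2 * (n : ℝ)) * ∑ k ∈ Finset.Icc 1 (2 * n), |b k| ^ p := by positivity
    rw [lpNorm_eq hm hmn b p]
    constructor
    · have h := Real.rpow_le_rpow hS (lower_p hm hmn b hp) (by positivity : 0 ≤ 1 / p)
      rw [rpow_root (by norm_num) hI hp] at h
      linarith
    · have h := Real.rpow_le_rpow hI (upper_p hm hmn rfl b hp) (by positivity : 0 ≤ 1 / p)
      rw [rpow_root (by positivity) hS hp] at h
      refine h.trans ?_
      refine mul_le_mul_of_nonneg_right ?_ (by positivity)
      nlinarith [sq_nonneg (Real.log ((n : ℝ) / m) - 1)]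
  · set M := (Finset.Icc 1 (2 * n)).sup' (Finset.nonempty_Icc.mpr (by omega)) fun k => |b k| with hMdef
    have hb : ∀ k ∈ Finset.Icc 1 (2 * n), |b k| ≤ M := fun k hk => Finset.le_sup' (fun k => |b k|) hk
    have hM : 0 ≤ M := (abs_nonneg (b 1)).trans (hb 1 (Finset.mem_Icc.mpr ⟨le_rfl, by omega⟩))
    have hbd : ∀ x : Set.Icc (-1 : ℝ) 1, |∑ k ∈ Finset.Icc 1 (2 * n), b k * wav n m k x| ≤
        288 * (1 + Real.log ((n : ℝ) / (m : ℝ)) ^ 2) * M := by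
      rintro ⟨x, hx⟩
      have h := sum_wav_cos hm hmn b ⟨Real.arccos_nonneg x, Real.arccos_le_pi x⟩
      rw [Real.cos_arccos hx.1 hx.2] at h
      simp only [h]
      refine (fext_sup hm hmn rfl b hM hb _).trans ?_
      refine mul_le_mul_of_nonneg_right ?_ (by positivity)
      nlinarith [sq_nonneg (Real.log ((n : ℝ) / m) - 1)]
    have : Nonempty (Set.Icc (-1 : ℝ) 1) := ⟨⟨0, by norm_num⟩⟩
    have hub : M ≤ supNorm (fun x => ∑ k ∈ Finset.Icc 1 (2 * n), b k * wav n m k x) := by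
      refine Finset.sup'_le _ _ fun k hk => ?_
      have hk := Finset.mem_Icc.mp hk
      have ha : ang (3 * n) (3 * k / 2) ∈ Set.Icc 0 π := ang_mem (by omega) (by omega)
      have h := sum_wav_cos hm hmn b ha
      rw [fext_node hm hmn b hk.1 hk.2] at h
      simp only [← h]
      unfold supNorm
      exact le_ciSup (f := fun x : Set.Icc (-1 : ℝ) 1 => |∑ k ∈ Finset.Icc 1 (2 * n), b k * wav n m k x|)
        ⟨_, by rintro _ ⟨x, rfl⟩; exact hbd x⟩
        ⟨Real.cos (ang (3 * n) (3 * k / 2)), Real.neg_one_le_cos _, Real.cos_le_one _⟩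
    exact ⟨by linarith, ciSup_le hbd⟩
end

section
/- For all integers n, m with 0 < m < n and all r, s = 1,…,n, the Gram matrix of the scaling functions satisfies ⟨Φ_{n,r}^m, Φ_{n,s}^m⟩ = (π/n)²·Σ_{i=0}^{n−1} ν_{n,i}^m·p_i(x_r^n)·p_i(x_s^n), and moreover ⟨Φ_{n,r}^m, Φ_{n,s}^m⟩ = (π/(3n))·(δ_{r,s} + Σ_{k=1}^{2n} Φ_{n,r}^m(y_k^n)·Φ_{n,s}^m(y_k^n)), where ν_{n,i}^m = 1 if 0 ≤ i ≤ n−m and ν_{n,i}^m = (m² + (n−i)²)/(2m²) if n−m < i < n. -/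
open Real MeasureTheory Finset

/-- Normalisation constants of the Chebyshev polynomials. -/
noncomputable def auxC (i : ℕ) : ℝ := if i = 0 then Real.sqrt (1 / Real.pi) else Real.sqrt (2 / Real.pi)

/-- Orthonormal Chebyshev polynomials as polynomials. -/
noncomputable def auxP (i : ℕ) : Polynomial ℝ :=
  Polynomial.C (auxC i) * Polynomial.Chebyshev.T ℝ (i : ℤ)

lemma chebP_cos (i : ℕ) (x : ℝ) (h1 : -1 ≤ x) (h2 : x ≤ 1) : chebP i x = (auxP i).eval x := by
  have hT := Polynomial.Chebyshev.T_real_cos (Real.arccos x) (i : ℤ)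
  rw [Real.cos_arccos h1 h2] at hT
  unfold chebP auxP auxC
  rw [Polynomial.eval_mul, Polynomial.eval_C, hT]
  by_cases h : i = 0
  · subst h; simp
  · simp [h]

lemma auxP_int (i j : ℕ) :
    ∫ x, (auxP i).eval x * (auxP j).eval x ∂Polynomial.Chebyshev.measureT =
      if i = j then 1 else 0 := by
  have e : ∀ x : ℝ, (auxP i).eval x * (auxP j).eval x =
      (auxC i * auxC j) * ((Polynomial.Chebyshev.T ℝ (i : ℤ)).eval x *
        (Polynomial.Chebyshev.T ℝ (j : ℤ)).eval x) := by
    intro x; simp only [auxP, Polynomial.eval_mul, Polynomial.eval_C]; ring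
  simp_rw [e]
  rw [MeasureTheory.integral_const_mul]
  by_cases h : i = j
  · subst h
    by_cases h0 : i = 0
    · subst h0
      have := Polynomial.Chebyshev.integral_eval_T_real_mul_self_measureT_zero
      rw [Nat.cast_zero, this]
      simp only [auxC, if_true]
      rw [Real.mul_self_sqrt (by positivity)]
      field_simp
    · rw [Polynomial.Chebyshev.integral_T_real_mul_self_measureT_of_ne_zero h0]
      simp only [auxC, h0, if_true, if_false]
      rw [Real.mul_self_sqrt (by positivity)]
      field_simp
  · rw [Polynomial.Chebyshev.integral_eval_T_real_mul_eval_T_real_measureT_of_ne h]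
    simp [h]

lemma auxP_degree (i : ℕ) : (auxP i).degree ≤ i := by
  unfold auxP
  refine (Polynomial.degree_mul_le _ _).trans ?_
  refine (add_le_add Polynomial.degree_C_le le_rfl).trans ?_
  simp [Polynomial.Chebyshev.degree_T]

lemma sumZeroes_eq (N : ℕ) (P : Polynomial ℝ) :
    Polynomial.Chebyshev.sumZeroes N P =
      Real.pi / N * ∑ k ∈ Finset.Icc 1 N, P.eval (chebNode N k) := by
  unfold Polynomial.Chebyshev.sumZeroes
  congr 1
  rw [← Finset.Ico_add_one_right_eq_Icc, Finset.sum_Ico_eq_sum_range]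
  apply Finset.sum_congr (by simp)
  intro i _
  unfold chebNode
  congr 2
  push_cast
  ring

lemma chebNode_ge (n k : ℕ) : -1 ≤ chebNode n k := Real.neg_one_le_cos _
lemma chebNode_le (n k : ℕ) : chebNode n k ≤ 1 := Real.cos_le_one _

lemma disc_orth (N : ℕ) (hN : N ≠ 0) (i j : ℕ) (h : i + j < 2 * N) :
    Real.pi / N * ∑ k ∈ Finset.Icc 1 N, chebP i (chebNode N k) * chebP j (chebNode N k) =
      if i = j then 1 else 0 := by
  rw [← auxP_int i j]
  have hd : (auxP i * auxP j).degree < 2 * N := by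
    refine (Polynomial.degree_mul_le _ _).trans_lt ?_
    refine (add_le_add (auxP_degree i) (auxP_degree j)).trans_lt ?_
    exact_mod_cast h
  have := Polynomial.Chebyshev.integral_eq_sumZeroes hN hd
  rw [sumZeroes_eq] at this
  simp only [Polynomial.eval_mul] at this
  rw [this]
  congr 1
  refine Finset.sum_congr rfl fun k _ => ?_
  rw [chebP_cos i _ (chebNode_ge _ _) (chebNode_le _ _),
    chebP_cos j _ (chebNode_ge _ _) (chebNode_le _ _)]

lemma dual_orth (n : ℕ) (hn : n ≠ 0) (r s : ℕ) (hr : r ∈ Finset.Icc 1 n) (hs : s ∈ Finset.Icc 1 n) :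
    Real.pi / n * ∑ i ∈ Finset.range n, chebP i (chebNode n r) * chebP i (chebNode n s) =
      if r = s then 1 else 0 := by
  let A : Matrix (Fin n) (Fin n) ℝ := fun i k => Real.pi / n * chebP i (chebNode n (k + 1))
  let B : Matrix (Fin n) (Fin n) ℝ := fun k i => chebP i (chebNode n (k + 1))
  have hAB : A * B = 1 := by
    ext i j
    have := disc_orth n hn i j (by omega)
    rw [← Finset.Ico_add_one_right_eq_Icc, Finset.sum_Ico_eq_sum_range, Nat.add_sub_cancel,
      Finset.sum_range, Finset.mul_sum] at this
    rw [Matrix.mul_apply, Matrix.one_apply]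
    simp only [Fin.ext_iff]
    rw [← this]
    refine Finset.sum_congr rfl fun k _ => ?_
    simp only [A, B]
    rw [add_comm (k : ℕ) 1]; ring
  have hBA : B * A = 1 := mul_eq_one_comm.mp hAB
  rw [Finset.mem_Icc] at hr hs
  have h := congrFun (congrFun hBA ⟨r - 1, by omega⟩) ⟨s - 1, by omega⟩
  rw [Matrix.mul_apply, Matrix.one_apply] at h
  simp only [A, B, Fin.ext_iff, Nat.sub_add_cancel hr.1, Nat.sub_add_cancel hs.1] at h
  rw [Finset.sum_range, Finset.mul_sum]
  have e : (if r = s then (1 : ℝ) else 0) = if r - 1 = s - 1 then 1 else 0 := by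
    congr 1; apply propext; omega
  rw [e, ← h]
  refine Finset.sum_congr rfl fun k _ => ?_
  ring

lemma sum_fold (n : ℕ) (F : ℕ → ℝ) (h1 : F n = 0) (h2 : F (2 * n) = 0) :
    ∑ i ∈ Finset.range (2 * n), F i = ∑ i ∈ Finset.range n, (F i + F (2 * n - i)) := by
  rw [Finset.sum_add_distrib, two_mul, Finset.sum_range_add]
  congr 1
  have a := Finset.sum_range_succ (fun j => F (n + j)) n
  have b := Finset.sum_range_succ' (fun j => F (n + j)) n
  have c := Finset.sum_range_reflect (fun j => F (n + (j + 1))) n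
  have d : ∑ i ∈ Finset.range n, F (n + n - i) =
      ∑ j ∈ Finset.range n, F (n + (n - 1 - j + 1)) := by
    refine Finset.sum_congr rfl fun i hi => ?_
    rw [Finset.mem_range] at hi
    congr 1; omega
  rw [two_mul] at h2
  simp only [add_zero] at a b
  rw [d, c]
  linarith

lemma node_split (F : ℕ → ℝ) (n : ℕ) :
    ∑ k ∈ Finset.Icc 1 (3 * n), F k =
      ∑ k ∈ Finset.Icc 1 n, F (3 * k - 1) + ∑ k ∈ Finset.Icc 1 (2 * n), F (3 * k / 2) := by
  induction n with
  | zero => simp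
  | succ n ih =>
    rw [show 3 * (n + 1) = 3 * n + 1 + 1 + 1 by ring, show 2 * (n + 1) = 2 * n + 1 + 1 by ring,
      Finset.sum_Icc_succ_top (by omega), Finset.sum_Icc_succ_top (by omega),
      Finset.sum_Icc_succ_top (by omega), Finset.sum_Icc_succ_top (by omega),
      Finset.sum_Icc_succ_top (by omega), Finset.sum_Icc_succ_top (by omega), ih,
      show 3 * (n + 1) - 1 = 3 * n + 1 + 1 by omega,
      show 3 * (2 * n + 1) / 2 = 3 * n + 1 by omega,
      show 3 * (2 * n + 1 + 1) / 2 = 3 * n + 1 + 1 + 1 by omega]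
    ring

lemma chebNode_three (n k : ℕ) (hk : 1 ≤ k) : chebNode (3 * n) (3 * k - 1) = chebNode n k := by
  unfold chebNode
  congr 1
  rw [Nat.cast_sub (by omega)]
  push_cast
  rcases eq_or_ne n 0 with rfl | h
  · simp
  · field_simp
    ring

lemma chebP_node (n k i : ℕ) (hn : n ≠ 0) :
    chebP i (chebNode n k) =
      auxC i * Real.cos (i * ((2 * (k : ℝ) - 1) * Real.pi / (2 * (n : ℝ)))) := by
  rw [chebP_cos i _ (chebNode_ge _ _) (chebNode_le _ _), auxP, Polynomial.eval_mul,
    Polynomial.eval_C, chebNode, Polynomial.Chebyshev.T_real_cos]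
  simp

lemma chebP_node_n (n k : ℕ) (hn : n ≠ 0) : chebP n (chebNode n k) = 0 := by
  rw [chebP_node n k n hn]
  have : (n : ℝ) * ((2 * (k : ℝ) - 1) * Real.pi / (2 * (n : ℝ))) = (k : ℤ) * Real.pi - Real.pi / 2 := by
    have : (n : ℝ) ≠ 0 := by exact_mod_cast hn
    push_cast
    field_simp
  rw [this, Real.cos_sub_pi_div_two, Real.sin_int_mul_pi, mul_zero]

lemma chebP_node_reflect (n k i : ℕ) (hi : 0 < i) (hin : i < n) :
    chebP (2 * n - i) (chebNode n k) = - chebP i (chebNode n k) := by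
  have hn : n ≠ 0 := by omega
  rw [chebP_node n k _ hn, chebP_node n k _ hn]
  have hc : auxC (2 * n - i) = auxC i := by
    unfold auxC
    rw [if_neg (by omega), if_neg (by omega)]
  rw [hc]
  set t := (2 * (k : ℝ) - 1) * Real.pi / (2 * (n : ℝ)) with ht
  have : ((2 * n - i : ℕ) : ℝ) * t = (k : ℤ) * (2 * Real.pi) - (i * t + Real.pi) := by
    have : (n : ℝ) ≠ 0 := by exact_mod_cast hn
    rw [Nat.cast_sub (by omega), ht]
    push_cast
    field_simp
    ring
  rw [this, Real.cos_int_mul_two_pi_sub, Real.cos_add_pi]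
  ring

lemma vpK_eq (n m : ℕ) (hm : 0 < m) (hmn : m < n) (x y : ℝ) :
    vpK n m x y = ∑ i ∈ Finset.range (2 * n), muC n m i * (chebP i x * chebP i y) := by
  unfold vpK darboux
  have hm' : (m : ℝ) ≠ 0 := by positivity
  have e : ∀ r ∈ Finset.Icc (n - m) (n + m - 1),
      ∑ s ∈ Finset.range (r + 1), chebP s x * chebP s y =
      ∑ s ∈ Finset.range (2 * n), if s ≤ r then chebP s x * chebP s y else 0 := by
    intro r hr
    rw [Finset.mem_Icc] at hr
    rw [← Finset.sum_filter]
    refine Finset.sum_congr ?_ fun _ _ => rfl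
    ext s; simp; omega
  rw [Finset.sum_congr rfl e, Finset.sum_comm, Finset.mul_sum]
  refine Finset.sum_congr rfl fun i hi => ?_
  rw [Finset.mem_range] at hi
  rw [← Finset.sum_filter, Finset.sum_const, nsmul_eq_mul, ← mul_assoc]
  congr 1
  have f : (Finset.Icc (n - m) (n + m - 1)).filter (fun r => i ≤ r) =
      Finset.Icc (max (n - m) i) (n + m - 1) := by
    ext s; simp; omega
  rw [f, Nat.card_Icc]
  unfold muC
  split_ifs with h1 h2
  · rw [show n + m - 1 + 1 - max (n - m) i = 2 * m by omega]
    push_cast; field_simp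
  · rw [show n + m - 1 + 1 - max (n - m) i = n + m - i by omega, Nat.cast_sub (by omega)]
    push_cast; field_simp; ring
  · rw [show n + m - 1 + 1 - max (n - m) i = 0 by omega]
    simp

/-- The scaling function as a polynomial. -/
noncomputable def auxS (n m r : ℕ) : Polynomial ℝ :=
  ∑ i ∈ Finset.range (2 * n),
    Polynomial.C (Real.pi / n * (muC n m i * chebP i (chebNode n r))) * auxP i

lemma scal_eq (n m : ℕ) (hm : 0 < m) (hmn : m < n) (r : ℕ) (x : ℝ) (h1 : -1 ≤ x) (h2 : x ≤ 1) :
    scal n m r x = (auxS n m r).eval x := by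
  unfold scal auxS
  rw [vpK_eq n m hm hmn, Finset.mul_sum, Polynomial.eval_finsetSum]
  refine Finset.sum_congr rfl fun i _ => ?_
  rw [Polynomial.eval_mul, Polynomial.eval_C, chebP_cos i x h1 h2]
  ring

lemma auxS_degree (n m : ℕ) (hn : n ≠ 0) (r : ℕ) : (auxS n m r).degree ≤ (2 * n : ℕ) := by
  unfold auxS
  rw [← Polynomial.mem_degreeLE]
  refine Submodule.sum_mem _ fun i hi => ?_
  rw [Polynomial.mem_degreeLE]
  rw [Finset.mem_range] at hi
  refine (Polynomial.degree_mul_le _ _).trans ?_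
  refine (add_le_add Polynomial.degree_C_le (auxP_degree i)).trans ?_
  rw [zero_add]
  exact_mod_cast hi.le

lemma muC_fold (n m i : ℕ) (hm : 0 < m) (hmn : m < n) (hi : i < n) :
    muC n m i + muC n m (2 * n - i) = 1 ∧
      muC n m i ^ 2 + muC n m (2 * n - i) ^ 2 = nuC n m i := by
  have hm' : (m : ℝ) ≠ 0 := by positivity
  unfold muC nuC
  rw [if_neg (show ¬ (2 * n - i ≤ n - m) by omega)]
  by_cases h : i ≤ n - m
  · rw [if_pos h, if_neg (by omega), if_pos h]
    simp
  · rw [if_neg h, if_pos (by omega), if_pos (by omega), if_neg h, Nat.cast_sub (by omega)]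
    push_cast
    constructor <;> field_simp <;> ring

lemma muC_two (n m : ℕ) (hmn : m < n) (hm : 0 < m) : muC n m (2 * n) = 0 := by
  unfold muC
  rw [if_neg (by omega), if_neg (by omega)]

lemma fold_prod (n m k r s : ℕ) (hk : k ≠ 0) (hm : 0 < m) (hmn : m < n) :
    ∑ i ∈ Finset.range (2 * n),
        muC n m i ^ k * (chebP i (chebNode n r) * chebP i (chebNode n s)) =
      ∑ i ∈ Finset.range n, (muC n m i ^ k + muC n m (2 * n - i) ^ k) *
        (chebP i (chebNode n r) * chebP i (chebNode n s)) := by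
  rw [sum_fold]
  · refine Finset.sum_congr rfl fun i hi => ?_
    rw [Finset.mem_range] at hi
    rcases Nat.eq_zero_or_pos i with rfl | h0
    · simp [muC_two n m hmn hm, hk]
    · rw [chebP_node_reflect n r i h0 hi, chebP_node_reflect n s i h0 hi]
      ring
  · rw [chebP_node_n n r (by omega)]; ring
  · simp [muC_two n m hmn hm, hk]

lemma scal_interp (n m : ℕ) (hm : 0 < m) (hmn : m < n)
    (r s : ℕ) (hr : r ∈ Finset.Icc 1 n) (hs : s ∈ Finset.Icc 1 n) :
    scal n m r (chebNode n s) = if r = s then 1 else 0 := by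
  unfold scal
  rw [vpK_eq n m hm hmn, ← dual_orth n (by omega) r s hr hs]
  congr 1
  have := fold_prod n m 1 r s one_ne_zero hm hmn
  simp only [pow_one] at this
  rw [this]
  refine Finset.sum_congr rfl fun i hi => ?_
  rw [Finset.mem_range] at hi
  rw [(muC_fold n m i hm hmn hi).1, one_mul]

lemma scal_integral (n m : ℕ) (hm : 0 < m) (hmn : m < n) (r s : ℕ) :
    (∫ x in (-1 : ℝ)..1, scal n m r x * scal n m s x * chebW x) =
      ∫ x, (auxS n m r * auxS n m s).eval x ∂Polynomial.Chebyshev.measureT := by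
  rw [Polynomial.Chebyshev.integral_measureT]
  refine intervalIntegral.integral_congr fun x hx => ?_
  rw [Set.uIcc_of_le (by norm_num)] at hx
  simp only [chebW]
  rw [scal_eq n m hm hmn r x hx.1 hx.2, scal_eq n m hm hmn s x hx.1 hx.2, Polynomial.eval_mul]
  simp

lemma auxS_integral (n m r s : ℕ) :
    ∫ x, (auxS n m r * auxS n m s).eval x ∂Polynomial.Chebyshev.measureT =
      (Real.pi / n) ^ 2 * ∑ i ∈ Finset.range (2 * n),
        muC n m i ^ 2 * (chebP i (chebNode n r) * chebP i (chebNode n s)) := by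
  have e : ∀ x : ℝ, (auxS n m r * auxS n m s).eval x =
      ∑ i ∈ Finset.range (2 * n), ∑ j ∈ Finset.range (2 * n),
        (Real.pi / n * (muC n m i * chebP i (chebNode n r))) *
        (Real.pi / n * (muC n m j * chebP j (chebNode n s))) *
        ((auxP i).eval x * (auxP j).eval x) := by
    intro x
    unfold auxS
    rw [Polynomial.eval_mul, Polynomial.eval_finsetSum, Polynomial.eval_finsetSum,
      Finset.sum_mul_sum]
    refine Finset.sum_congr rfl fun i _ => Finset.sum_congr rfl fun j _ => ?_
    simp only [Polynomial.eval_mul, Polynomial.eval_C]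
    ring
  simp_rw [e]
  rw [MeasureTheory.integral_finsetSum, Finset.mul_sum]
  · refine Finset.sum_congr rfl fun i hi => ?_
    rw [MeasureTheory.integral_finsetSum]
    · simp_rw [MeasureTheory.integral_const_mul, auxP_int]
      simp only [mul_ite, mul_one, mul_zero]
      rw [Finset.sum_ite_eq, if_pos hi]
      ring
    · intro j _
      exact Polynomial.Chebyshev.integrable_measureT (by fun_prop)
  · intro i _
    exact Polynomial.Chebyshev.integrable_measureT (by fun_prop)

theorem scal_gram_matrix (n m : ℕ) (hm : 0 < m) (hmn : m < n)
    (r s : ℕ) (hr : r ∈ Finset.Icc 1 n) (hs : s ∈ Finset.Icc 1 n) :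
    (∫ x in (-1 : ℝ)..1, scal n m r x * scal n m s x * chebW x) =
        (Real.pi / (n : ℝ)) ^ 2 *
          ∑ i ∈ Finset.range n, nuC n m i * chebP i (chebNode n r) * chebP i (chebNode n s) ∧
      (∫ x in (-1 : ℝ)..1, scal n m r x * scal n m s x * chebW x) =
        (Real.pi / (3 * (n : ℝ))) * ((if r = s then 1 else 0) +
          ∑ k ∈ Finset.Icc 1 (2 * n), scal n m r (yNode n k) * scal n m s (yNode n k)) := by
  have hn : n ≠ 0 := by omega
  rw [scal_integral n m hm hmn]
  refine ⟨?_, ?_⟩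
  · rw [auxS_integral, fold_prod n m 2 r s two_ne_zero hm hmn]
    congr 1
    refine Finset.sum_congr rfl fun i hi => ?_
    rw [Finset.mem_range] at hi
    rw [(muC_fold n m i hm hmn hi).2]
    ring
  · have hd : (auxS n m r * auxS n m s).degree < 2 * (3 * n : ℕ) := by
      refine (Polynomial.degree_mul_le _ _).trans_lt ?_
      refine (add_le_add (auxS_degree n m hn r) (auxS_degree n m hn s)).trans_lt ?_
      have : 2 * n + 2 * n < 2 * (3 * n) := by omega
      exact_mod_cast this
    rw [Polynomial.Chebyshev.integral_eq_sumZeroes (by omega) hd, sumZeroes_eq, node_split]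
    push_cast
    congr 1
    congr 1
    · have e : ∀ k ∈ Finset.Icc 1 n, (auxS n m r * auxS n m s).eval (chebNode (3 * n) (3 * k - 1)) =
          if r = k then (if s = k then 1 else 0) else 0 := by
        intro k hk
        rw [chebNode_three n k (Finset.mem_Icc.mp hk).1, Polynomial.eval_mul,
          ← scal_eq n m hm hmn r _ (chebNode_ge _ _) (chebNode_le _ _),
          ← scal_eq n m hm hmn s _ (chebNode_ge _ _) (chebNode_le _ _),
          scal_interp n m hm hmn r k hr hk, scal_interp n m hm hmn s k hs hk]
        split_ifs <;> simp
      rw [Finset.sum_congr rfl e, Finset.sum_ite_eq, if_pos hr]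
      simp only [eq_comm]
    · refine Finset.sum_congr rfl fun k _ => ?_
      unfold yNode
      rw [Polynomial.eval_mul, scal_eq n m hm hmn r _ (chebNode_ge _ _) (chebNode_le _ _),
        scal_eq n m hm hmn s _ (chebNode_ge _ _) (chebNode_le _ _)]
end
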